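/- arXiv:1806.02798 — 2 statements merged into one kernel-verified Lean document; each statement's English description precedes it below -/
import Mathlib

section
/- Let Ŵ denote the set of walk lifts ξ of configurations η ∈ X such that min{x ∈ ℤ : ξ(x) = 0} = 0 (Record 0 at the origin). If ξ, ξ′ ∈ Ŵ satisfy M_k ξ = M_k ξ′ for every k ≥ 1, then ξ = ξ′; that is, the slot decomposition map ξ ↦ (M_k ξ)_{k≥1} is injective on Ŵ and a configuration can be reconstructed from its components. -/
open MeasureTheory Filter Finset

/-- A ball configuration: a box at each integer, occupied (`true`) or empty (`false`). -/
abbrev Cfg := ℤ → Bool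

/-- Numerical (integer) value of a box. -/
def valZ (b : Bool) : ℤ := if b then 1 else 0

/-- Numerical (real) value of a box. -/
def valR (b : Bool) : ℝ := if b then 1 else 0

/-- `x` is a record of the configuration `η`:
for every `z ≤ x`, the number of balls in `[z,x]` is strictly smaller than the
number of empty boxes in `[z,x]`. -/
def isRecord (η : Cfg) (x : ℤ) : Prop :=
  ∀ z ≤ x, (∑ y ∈ Finset.Icc z x, valZ (η y)) < ∑ y ∈ Finset.Icc z x, (1 - valZ (η y))

open Classical in
/-- The box-ball (Takahashi–Satsuma) operator `T`. -/
noncomputable def bbsT (η : Cfg) : Cfg := fun x => if isRecord η x then false else !(η x)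

/-- `η` has asymptotic density `lam` of balls on both half lines. -/
def inXlam (lam : ℝ) (η : Cfg) : Prop :=
  Tendsto (fun y : ℕ => (∑ x ∈ Finset.Icc (-(y : ℤ)) 0, valR (η x)) / (y : ℝ))
    atTop (nhds lam) ∧
  Tendsto (fun y : ℕ => (∑ x ∈ Finset.Icc (0 : ℤ) (y : ℤ), valR (η x)) / (y : ℝ))
    atTop (nhds lam)

/-- `η ∈ 𝒳`: it has a well-defined density `0 < lam < 1/2`. -/
def inX (η : Cfg) : Prop := ∃ lam : ℝ, 0 < lam ∧ lam < 1 / 2 ∧ inXlam lam η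

/-- `ξ` is a walk lift of the configuration `η`. -/
def IsLift (η : Cfg) (ξ : ℤ → ℤ) : Prop :=
  ∀ x : ℤ, ξ x - ξ (x - 1) = 2 * valZ (η x) - 1

/-- Running minimum `min_{y ≤ x} ξ(y)` of a walk. -/
noncomputable def runMin (ξ : ℤ → ℤ) (x : ℤ) : ℤ := sInf (ξ '' Set.Iic x)

/-- The box-ball operator on walks: reflection at the running minimum. -/
noncomputable def liftT (ξ : ℤ → ℤ) : ℤ → ℤ := fun x => 2 * runMin ξ x - ξ x

/-- The canonical walk lift of `η` with value `0` at the origin. -/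
noncomputable def xi0 (η : Cfg) : ℤ → ℤ := fun x =>
  if 0 ≤ x then ∑ y ∈ Finset.Icc 1 x, (2 * valZ (η y) - 1)
  else -∑ y ∈ Finset.Icc (x + 1) 0, (2 * valZ (η y) - 1)
/-- Maximal runs of a word of (position, letter) pairs. -/
def runsOf : List (ℤ × Bool) → List (List (ℤ × Bool))
  | [] => []
  | a :: l =>
    match runsOf l with
    | [] => [[a]]
    | r :: rs =>
      if (r.head?.map Prod.snd) = some a.2 then (a :: r) :: rs else [a] :: r :: rs

/-- Takahashi–Satsuma step: find the leftmost run whose length is at least the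
length of the run preceding it; the soliton consists of the preceding run
together with the first (that many) letters of the selected run. -/
def findSoliton : List (List (ℤ × Bool)) → Option (List (ℤ × Bool))
  | r1 :: r2 :: rest =>
    if r1.length ≤ r2.length then some (r1 ++ r2.take r1.length)
    else findSoliton (r2 :: rest)
  | _ => none

/-- Iterated Takahashi–Satsuma algorithm (with fuel): repeatedly identify the
soliton given by `findSoliton` and remove its letters from the word. -/
def tsAux : ℕ → List (ℤ × Bool) → List (List (ℤ × Bool))
  | 0, _ => []
  | fuel + 1, w =>
    match findSoliton (runsOf w) with
    | none => []
    | some s => s :: tsAux fuel (w.filter (fun a => !((s.map Prod.fst).contains a.1)))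

/-- The solitons identified by the Takahashi–Satsuma algorithm in a finite word. -/
def tsSolitons (w : List (ℤ × Bool)) : List (List (ℤ × Bool)) := tsAux w.length w

/-- The word (with positions) strictly between sites `y1` and `y2`. -/
def excursionWord (η : Cfg) (y1 y2 : ℤ) : List (ℤ × Bool) :=
  (List.range (y2 - y1 - 1).toNat).map fun n => (y1 + 1 + n, η (y1 + 1 + n))

/-- `Γ_k η`: the set of `k`-solitons of `η`, each identified with the set of `2k`
sites it occupies.  A `k`-soliton is obtained by applying the Takahashi–Satsuma
algorithm to an excursion of `η` (the word between two consecutive records). -/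
def Gamma (η : Cfg) (k : ℕ) : Set (Finset ℤ) :=
  {γ | ∃ y1 y2 : ℤ, y1 < y2 ∧ isRecord η y1 ∧ isRecord η y2 ∧
    (∀ z : ℤ, y1 < z → z < y2 → ¬ isRecord η z) ∧
    ∃ s ∈ tsSolitons (excursionWord η y1 y2), s.length = 2 * k ∧
      γ = (s.map Prod.fst).toFinset}

/-- The head of a soliton `γ` of `η`: the positions of its ones. -/
def headF (η : Cfg) (γ : Finset ℤ) : Finset ℤ := γ.filter fun x => η x = true

/-- The tail of a soliton `γ` of `η`: the positions of its zeros. -/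
def tailF (η : Cfg) (γ : Finset ℤ) : Finset ℤ := γ.filter fun x => η x = false
/-- `x` is a `k`-slot of `η`: either a record, or the `j`-th smallest site of the
tail or of the head of some soliton, with `j > k` (slot level `j - 1 ≥ k`). -/
def IsKSlot (η : Cfg) (k : ℕ) (x : ℤ) : Prop :=
  isRecord η x ∨ ∃ m : ℕ, ∃ γ ∈ Gamma η m,
    (x ∈ tailF η γ ∧ k < ((tailF η γ).filter fun y => y ≤ x).card) ∨
    (x ∈ headF η γ ∧ k < ((headF η γ).filter fun y => y ≤ x).card)

open Classical in
/-- Increasing enumeration of a (doubly unbounded, locally finite) set `S ⊆ ℤ`,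
normalized so that the `0`-th element is the base point `b`.  (Junk value if no
such enumeration exists.) -/
noncomputable def enumZ (S : Set ℤ) (b : ℤ) : ℤ → ℤ :=
  if h : ∃ f : ℤ → ℤ, StrictMono f ∧ f 0 = b ∧ Set.range f = S then h.choose
  else fun _ => 0

/-- Position `r(ξ,j)` of Record `j` of a walk `ξ`: leftmost site where `ξ` takes
the value `-j`. -/
noncomputable def recPos (ξ : ℤ → ℤ) (j : ℤ) : ℤ := sInf {x : ℤ | ξ x = -j}

/-- `s_k(ξ,i)`: the `i`-th `k`-slot of the configuration `η` lifted by the walk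
`ξ`, enumerated increasingly and normalized by `s_k(ξ,0) = r(ξ,0)`. -/
noncomputable def skEnum (η : Cfg) (ξ : ℤ → ℤ) (k : ℕ) : ℤ → ℤ :=
  enumZ {x : ℤ | IsKSlot η k x} (recPos ξ 0)

/-- `M_k ξ (i)`: the number of `k`-solitons appended to the `i`-th `k`-slot,
i.e. contained in `[s_k(ξ,i)+1, s_k(ξ,i+1)-1]`. -/
noncomputable def Mk (η : Cfg) (ξ : ℤ → ℤ) (k : ℕ) (i : ℤ) : ℕ :=
  Set.ncard {γ | γ ∈ Gamma η k ∧
    ∀ x ∈ γ, skEnum η ξ k i < x ∧ x < skEnum η ξ k (i + 1)}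

open Classical in
/-- The trajectory `γ^t` of a tagged `k`-soliton `γ` of `η`: `γ^0 = γ` and
`γ^{t+1}` is the `k`-soliton of `T^{t+1} η` whose head is the tail of `γ^t`. -/
noncomputable def solTraj (η : Cfg) (k : ℕ) (γ : Finset ℤ) : ℕ → Finset ℤ
  | 0 => γ
  | t + 1 =>
    if h : ∃ γ' ∈ Gamma (bbsT^[t + 1] η) k,
        headF (bbsT^[t + 1] η) γ' = tailF (bbsT^[t] η) (solTraj η k γ t)
    then h.choose else ∅

/-- `J_m^t ξ`: the flow of `m`-solitons through Record `0` by time `t`. -/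
noncomputable def Jflow (η : Cfg) (ξ : ℤ → ℤ) (m : ℕ) (t : ℕ) : ℕ :=
  Set.ncard {γ | γ ∈ Gamma η m ∧ (∀ x ∈ γ, x < recPos ξ 0) ∧
    ∀ x ∈ solTraj η m γ t, recPos (liftT^[t] ξ) 0 ≤ x}

/-- `o_k^t(ξ) = Σ_{m>k} 2(m-k)·J_m^t ξ`: the flow of `k`-slots through Record
`0` by time `t`, counted as the number of pairs (an `m`-soliton `γ` with `m > k`
crossing Record `0` by time `t`, a site of `γ` of slot level `≥ k`); each such
`γ` carries exactly `2(m-k)` such sites. -/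
noncomputable def oOff (η : Cfg) (ξ : ℤ → ℤ) (k : ℕ) (t : ℕ) : ℕ :=
  Set.ncard {p : Finset ℤ × ℤ | ∃ m : ℕ, k < m ∧ p.1 ∈ Gamma η m ∧
    (∀ x ∈ p.1, x < recPos ξ 0) ∧
    (∀ x ∈ solTraj η m p.1 t, recPos (liftT^[t] ξ) 0 ≤ x) ∧
    ((p.2 ∈ tailF η p.1 ∧ k < ((tailF η p.1).filter fun y => y ≤ p.2).card) ∨
     (p.2 ∈ headF η p.1 ∧ k < ((headF η p.1).filter fun y => y ≤ p.2).card))}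

/-- The relabeled `i`-th `k`-slot at time `t`:
`s_k^t(ξ,i) = s_k(T^t ξ, o_k^t(ξ) + i)`. -/
noncomputable def skEnumT (η : Cfg) (ξ : ℤ → ℤ) (k : ℕ) (t : ℕ) (i : ℤ) : ℤ :=
  skEnum (bbsT^[t] η) (liftT^[t] ξ) k ((oOff η ξ k t : ℤ) + i)

/-!
Scan `η` from left to right, keeping a stack of the runs not yet paired off into solitons: these
alternate in letter and get strictly shorter towards the top, and a soliton is complete as soon as
the top run catches up with the one below it. The slot level of a site is the number of letters of
the top run that it joins.

For each `k`, the letter of the topmost run longer than `k` is the letter of the last `k`-slot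
read. It follows that the `c` sites of level `k` between two consecutive `(k + 1)`-slots alternate
in letter, starting with the letter opposite to that of the left `(k + 1)`-slot, and that the
`(k + 1)`-solitons in between are completed exactly at those sites among them that carry the letter
of the left `(k + 1)`-slot. So `M_{k + 1} = ⌊c / 2⌋` there, while the parity of `c` is read off the
letter of the right `(k + 1)`-slot. Hence the letters of the `(k + 1)`-slots and `M_{k + 1}`
determine the letters of the `k`-slots.

Among the `k`-slots with index in a fixed window all are records, hence empty, once `k` is large;
descending from there to the `0`-slots, which are all the sites, recovers `η`.
-/

namespace BoxBall

/-- A nonempty list of sites carrying a common letter: the runs of a word from which solitons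
have possibly been removed, so that the sites need not be adjacent. -/
structure Run where
  letter : Bool
  sites : List ℤ
  sites_ne_nil : sites ≠ []

namespace Run

/-- The number of letters of a run. -/
def length (r : Run) : ℕ := r.sites.length

/-- The run as a word of (position, letter) pairs. -/
def word (r : Run) : List (ℤ × Bool) := r.sites.map fun u => (u, r.letter)

/-- The run made of one letter. -/
def single (a : ℤ × Bool) : Run := ⟨a.2, [a.1], by simp⟩

/-- The run extended by one site on the right. -/
def snoc (r : Run) (x : ℤ) : Run := ⟨r.letter, r.sites ++ [x], by simp⟩

lemma length_pos (r : Run) : 0 < r.length := List.length_pos_iff.2 r.sites_ne_nil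

@[simp] lemma length_word (r : Run) : r.word.length = r.length := by simp [word, length]

@[simp] lemma length_single (a : ℤ × Bool) : (single a).length = 1 := rfl

@[simp] lemma length_snoc (r : Run) (x : ℤ) : (r.snoc x).length = r.length + 1 := by
  simp [snoc, length]

@[simp] lemma letter_single (a : ℤ × Bool) : (single a).letter = a.2 := rfl

@[simp] lemma letter_snoc (r : Run) (x : ℤ) : (r.snoc x).letter = r.letter := rfl

@[simp] lemma word_single (a : ℤ × Bool) : (single a).word = [a] := rfl

@[simp] lemma word_snoc (r : Run) (x : ℤ) : (r.snoc x).word = r.word ++ [(x, r.letter)] := by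
  simp [word, snoc]

@[simp] lemma map_fst_word (r : Run) : r.word.map Prod.fst = r.sites := by
  simp [word, Function.comp_def]

lemma word_ne_nil (r : Run) : r.word ≠ [] := by simpa [word] using r.sites_ne_nil

lemma snd_of_mem_word {r : Run} {a : ℤ × Bool} (ha : a ∈ r.word) : a.2 = r.letter := by
  obtain ⟨_, _, rfl⟩ := List.mem_map.1 ha
  rfl

end Run

lemma exists_runsOf_cons (a : ℤ × Bool) (l : List (ℤ × Bool)) :
    ∃ t rs, runsOf (a :: l) = (a :: t) :: rs := by
  rw [runsOf]
  split
  · exact ⟨[], [], rfl⟩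
  · split_ifs <;> exact ⟨_, _, rfl⟩

lemma runsOf_append {u w : List (ℤ × Bool)}
    (h : ∀ a ∈ u.getLast?, ∀ b ∈ w.head?, a.2 ≠ b.2) :
    runsOf (u ++ w) = runsOf u ++ runsOf w := by
  induction u with
  | nil => rfl
  | cons a u ih =>
    cases u with
    | nil =>
      cases w with
      | nil => rfl
      | cons b w =>
        obtain ⟨t, rs, hw⟩ := exists_runsOf_cons b w
        have hab : b.2 ≠ a.2 := (h a rfl b rfl).symm
        rw [List.cons_append, List.nil_append, runsOf, hw]
        simp [runsOf, hab]
    | cons a' u =>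
      obtain ⟨t, rs, hu⟩ := exists_runsOf_cons a' u
      specialize ih (by simpa using h)
      rw [List.cons_append, runsOf, ih, hu, runsOf, hu]
      dsimp only [List.cons_append]
      split_ifs <;> rfl

lemma Run.exists_runsOf_word_append (r : Run) (v : List (ℤ × Bool)) :
    ∃ t rs, runsOf (r.word ++ v) = (r.word ++ t) :: rs := by
  obtain ⟨b, l, hl⟩ := r
  induction l with
  | nil => exact absurd rfl hl
  | cons u l ih =>
    cases l with
    | nil => exact exists_runsOf_cons _ _
    | cons u' l =>
      obtain ⟨t, rs, h⟩ := ih (by simp)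
      exact ⟨t, rs, by simp_all [word, runsOf]⟩

lemma Run.runsOf_word (r : Run) : runsOf r.word = [r.word] := by
  obtain ⟨b, l, hl⟩ := r
  induction l with
  | nil => exact absurd rfl hl
  | cons u l ih =>
    cases l with
    | nil => rfl
    | cons u' l =>
      specialize ih (by simp)
      simp_all [word, runsOf]

lemma findSoliton_eq_none {L : List (List (ℤ × Bool))}
    (h : L.IsChain fun a b => b.length < a.length) : findSoliton L = none := by
  induction L with
  | nil => rfl
  | cons x L ih =>
    cases L with
    | nil => rfl
    | cons y L =>
      rw [List.isChain_cons_cons] at h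
      rw [findSoliton, if_neg (by omega), ih h.2]

lemma findSoliton_append {L : List (List (ℤ × Bool))} {x y : List (ℤ × Bool)}
    {tl : List (List (ℤ × Bool))} (h : (L ++ [x]).IsChain fun a b => b.length < a.length) :
    findSoliton (L ++ x :: y :: tl) = findSoliton (x :: y :: tl) := by
  induction L with
  | nil => rfl
  | cons z L ih =>
    specialize ih h.tail
    cases L with
    | nil =>
      have hzx : x.length < z.length := by simpa using h
      simp only [List.cons_append, List.nil_append]
      rw [findSoliton, if_neg (by omega)]
    | cons z' L =>
      simp only [List.cons_append, List.isChain_cons_cons] at h ih ⊢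
      rw [findSoliton, if_neg (by omega), ih]

lemma filter_not_contains_append {u s v : List (ℤ × Bool)}
    (h : ((u ++ (s ++ v)).map Prod.fst).Nodup) :
    (u ++ (s ++ v)).filter (fun a => !(s.map Prod.fst).contains a.1) = u ++ v := by
  simp only [List.map_append, List.nodup_append, List.mem_append] at h
  obtain ⟨-, ⟨-, -, hsv⟩, hus⟩ := h
  have hu : u.filter (fun a => !(s.map Prod.fst).contains a.1) = u :=
    List.filter_eq_self.2 fun a ha => by
      have : a.1 ∉ s.map Prod.fst := fun hs => hus _ (List.mem_map_of_mem ha) _ (.inl hs) rfl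
      simpa using this
  have hs : s.filter (fun a => !(s.map Prod.fst).contains a.1) = [] :=
    List.filter_eq_nil_iff.2 fun a ha => by
      simp [-List.mem_map, List.mem_map_of_mem (f := Prod.fst) ha]
  have hv : v.filter (fun a => !(s.map Prod.fst).contains a.1) = v :=
    List.filter_eq_self.2 fun a ha => by
      have : a.1 ∉ s.map Prod.fst := fun hs => hsv _ hs _ (List.mem_map_of_mem ha) rfl
      simpa using this
  rw [List.filter_append, List.filter_append, hu, hs, hv, List.nil_append]

/-- A soliton cut out of a word, as the pair of runs the Takahashi–Satsuma step removes. -/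
structure Soliton where
  first : Run
  second : Run

namespace Soliton

/-- The word of a soliton, in the order in which `findSoliton` returns it. -/
def word (s : Soliton) : List (ℤ × Bool) := s.first.word ++ s.second.word

/-- The set of sites of a soliton, which is how `Gamma` records it. -/
def sites (s : Soliton) : Finset ℤ := (s.first.sites ++ s.second.sites).toFinset

lemma length_word_pos (s : Soliton) : 0 < s.word.length := by
  simp [word, s.first.length_pos]

lemma toFinset_map_fst_word (s : Soliton) : (s.word.map Prod.fst).toFinset = s.sites := by
  simp [word, sites]

lemma mem_sites {s : Soliton} {x : ℤ} :
    x ∈ s.sites ↔ x ∈ s.first.sites ∨ x ∈ s.second.sites := by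
  simp [sites]

end Soliton

/-- The state of the left-to-right scan that replaces the Takahashi–Satsuma recursion: the runs
read so far that have not been paired off into solitons, the last one first. -/
abbrev Stack := List Run

namespace Stack

/-- Read one letter, without looking for a soliton. -/
def push : Stack → ℤ × Bool → Stack
  | [], a => [.single a]
  | r :: st, a => if r.letter = a.2 then r.snoc a.1 :: st else .single a :: r :: st

/-- Remove the two top runs if the upper one has caught up with the lower one. -/
def cancel : Stack → Stack
  | r :: q :: st => if r.length = q.length then st else r :: q :: st
  | st => st

/-- The soliton formed by the two top runs, if the upper one has caught up with the lower one. -/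
def completed : Stack → Option Soliton
  | r :: q :: _ => if r.length = q.length then some ⟨q, r⟩ else none
  | _ => none

/-- Read one letter and remove the soliton it completes, if any. -/
def step (st : Stack) (a : ℤ × Bool) : Stack := cancel (push st a)

/-- The solitons completed while reading a word, in order of completion. -/
def solitons : Stack → List (ℤ × Bool) → List Soliton
  | _, [] => []
  | st, a :: v => (completed (push st a)).toList ++ solitons (step st a) v

/-- The word formed by the pending runs, from left to right. -/
def word : Stack → List (ℤ × Bool)
  | [] => []
  | r :: st => word st ++ r.word

/-- The number of letters of the top run that a letter `b` would join; this is the slot level of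
the site at which `b` is read. -/
def level : Stack → Bool → ℕ
  | [], _ => 0
  | r :: _, b => if r.letter = b then r.length else 0

/-- The letter of the topmost run longer than `k` (`false` if there is none). The sequence of
these letters for all `k` encodes the stack up to positions, as in the seat-number
configuration of the box-ball system. -/
def seat (k : ℕ) : Stack → Bool
  | [] => false
  | r :: st => if k < r.length then r.letter else seat k st

/-- The increment of the walk over the pending runs. -/
def height : Stack → ℤ
  | [] => 0
  | r :: st => (2 * valZ r.letter - 1) * r.length + height st

/-- The runs alternate in letter and get strictly shorter towards the top. -/
def Reduced (st : Stack) : Prop :=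
  st.IsChain fun r q => r.letter ≠ q.letter ∧ r.length < q.length

/-- The shape of a reduced stack after `push`: the top run may be as long as the next one. -/
def Pushed : Stack → Prop
  | r :: q :: st => r.letter ≠ q.letter ∧ r.length ≤ q.length ∧ Reduced (q :: st)
  | _ => True

/-- The bottom run, if any, consists of balls. -/
def BallBottom (st : Stack) : Prop := ∀ r ∈ st.getLast?, r.letter = true

lemma Reduced.tail {r : Run} {st : Stack} (h : Reduced (r :: st)) : Reduced st :=
  List.IsChain.tail h

lemma BallBottom.tail {r : Run} {st : Stack} (h : BallBottom (r :: st)) : BallBottom st := by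
  cases st with
  | nil => simp [BallBottom]
  | cons q st => simpa [BallBottom] using h

lemma exists_push_eq_cons (st : Stack) (a : ℤ × Bool) :
    ∃ r rest, push st a = r :: rest ∧ a.1 ∈ r.sites ∧ r.letter = a.2 ∧
      r.length = level st a.2 + 1 := by
  cases st with
  | nil => exact ⟨_, _, rfl, by simp [Run.single], rfl, rfl⟩
  | cons r st =>
    rw [push, level]
    split_ifs with h
    · exact ⟨_, _, rfl, by simp [Run.snoc], h, r.length_snoc _⟩
    · exact ⟨_, _, rfl, by simp [Run.single], rfl, rfl⟩

lemma Reduced.pushed {st : Stack} (h : Reduced st) (a : ℤ × Bool) : Pushed (push st a) := by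
  cases st with
  | nil => trivial
  | cons r st =>
    rw [push]
    split_ifs with hr
    · cases st with
      | nil => trivial
      | cons q st =>
        obtain ⟨⟨hne, hlt⟩, hst⟩ := List.isChain_cons_cons.1 h
        exact ⟨hne, by simpa using hlt, hst⟩
    · exact ⟨fun h => hr h.symm, r.length_pos, h⟩

lemma Pushed.cancel {st : Stack} (h : Pushed st) : Reduced (cancel st) := by
  match st, h with
  | [], _ => exact .nil
  | [_], _ => exact .singleton _
  | r :: q :: st, ⟨hne, hle, hst⟩ =>
    rw [Stack.cancel]
    split_ifs with hl
    · exact hst.tail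
    · exact List.isChain_cons_cons.2 ⟨⟨hne, lt_of_le_of_ne hle hl⟩, hst⟩

lemma Reduced.step {st : Stack} (h : Reduced st) (a : ℤ × Bool) : Reduced (step st a) :=
  (h.pushed a).cancel

lemma BallBottom.push {st : Stack} (h : BallBottom st) {a : ℤ × Bool}
    (h0 : st = [] → a.2 = true) : BallBottom (push st a) := by
  cases st with
  | nil => simpa [BallBottom, Stack.push] using h0
  | cons r st =>
    rw [Stack.push]
    split_ifs
    · cases st with
      | nil => simpa [BallBottom] using h
      | cons q st => simpa [BallBottom] using h
    · simpa [BallBottom] using h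

lemma BallBottom.cancel {st : Stack} (h : BallBottom st) : BallBottom (cancel st) := by
  match st, h with
  | [], h => exact h
  | [_], h => exact h
  | r :: q :: st, h =>
    rw [Stack.cancel]
    split_ifs
    · exact h.tail.tail
    · exact h

lemma completed_eq_some {st : Stack} {s : Soliton} (h : completed st = some s) :
    ∃ rest, st = s.second :: s.first :: rest ∧ s.second.length = s.first.length := by
  match st, h with
  | r :: q :: rest, h =>
    rw [completed] at h
    split_ifs at h with hl
    cases h
    exact ⟨rest, rfl, hl⟩

lemma cancel_of_completed_eq_none {st : Stack} (h : completed st = none) : cancel st = st := by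
  match st, h with
  | [], _ => rfl
  | [_], _ => rfl
  | r :: q :: st, h =>
    rw [completed] at h
    split_ifs at h with hl
    rw [cancel, if_neg hl]

lemma height_push (st : Stack) (a : ℤ × Bool) :
    height (push st a) = height st + (2 * valZ a.2 - 1) := by
  cases st with
  | nil => simp [push, height]
  | cons r st =>
    rw [push]
    split_ifs with hr
    · simp only [height, Run.length_snoc, Run.letter_snoc, Nat.cast_succ, ← hr]
      ring
    · simp only [height, Run.length_single, Run.letter_single, Nat.cast_one]
      ring

lemma Pushed.height_cancel {st : Stack} (h : Pushed st) : height (Stack.cancel st) = height st := by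
  match st, h with
  | [], _ => rfl
  | [r], _ => rfl
  | r :: q :: st, ⟨hne, _, _⟩ =>
    rw [Stack.cancel]
    split_ifs with hl
    · rw [height, height, hl]
      cases hr : r.letter <;> cases hq : q.letter <;> simp_all [valZ]
    · rfl

lemma height_pos {r : Run} {st : Stack} (hR : Reduced (r :: st)) (hB : BallBottom (r :: st)) :
    0 < height (r :: st) ∧ (r.letter = true → (r.length : ℤ) ≤ height (r :: st)) := by
  have hr := r.length_pos
  induction st generalizing r with
  | nil =>
    have hb : r.letter = true := by simpa [BallBottom] using hB
    simp [height, valZ, hb, hr]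
  | cons q st ih =>
    obtain ⟨⟨hne, hlt⟩, hst⟩ := List.isChain_cons_cons.1 hR
    obtain ⟨hpos, hle⟩ := ih hst hB.tail q.length_pos
    rw [height]
    cases hb : r.letter with
    | false =>
      have := hle (by simpa [hb] using hne)
      simp [valZ]
      omega
    | true =>
      simp [valZ]
      omega

lemma height_nonneg {st : Stack} (hR : Reduced st) (hB : BallBottom st) : 0 ≤ height st := by
  cases st with
  | nil => rfl
  | cons r st => exact (height_pos hR hB).1.le

lemma seat_push (k : ℕ) (st : Stack) (a : ℤ × Bool) :
    seat k (push st a) = if k ≤ level st a.2 then a.2 else seat k st := by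
  cases st with
  | nil => simp [push, seat, level]
  | cons r st =>
    rw [push, level]
    split_ifs with hr hk hk
    · rw [seat, if_pos (by simpa using hk), Run.letter_snoc, hr]
    · rw [seat, if_neg (by simpa using hk), seat, if_neg (by omega)]
    · rw [seat, if_pos (by simpa using hk), Run.letter_single]
    · rw [seat, if_neg (by simpa using hk)]

lemma seat_tail {k : ℕ} {r : Run} {st : Stack} (hR : Reduced (r :: st))
    (hB : BallBottom (r :: st)) (hk : k ≤ r.length) : seat k st = !r.letter := by
  cases st with
  | nil =>
    have hb : r.letter = true := by simpa [BallBottom] using hB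
    simp [seat, hb]
  | cons q st =>
    obtain ⟨⟨hne, hlt⟩, -⟩ := List.isChain_cons_cons.1 hR
    rw [seat, if_pos (hk.trans_lt hlt)]
    exact Bool.eq_not.2 hne.symm

lemma Pushed.seat_cancel {st : Stack} (h : Pushed st) (hB : BallBottom st) (k : ℕ) :
    seat k (Stack.cancel st) = seat k st := by
  match st, h with
  | [], _ => rfl
  | [r], _ => rfl
  | r :: q :: st, ⟨hne, _, hst⟩ =>
    rw [Stack.cancel]
    split_ifs with hl
    · by_cases hk : k < r.length
      · rw [seat, if_pos hk, seat_tail hst hB.tail (by omega), Bool.eq_not.2 hne]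
      · rw [seat, if_neg hk, seat, if_neg (by omega)]
    · rfl

lemma seat_step {st : Stack} (hR : Reduced st) (hB : BallBottom st) {a : ℤ × Bool}
    (h0 : st = [] → a.2 = true) (k : ℕ) :
    seat k (step st a) = if k ≤ level st a.2 then a.2 else seat k st := by
  rw [step, (hR.pushed a).seat_cancel (hB.push h0), seat_push]

lemma seat_of_lt_level {k : ℕ} {st : Stack} {b : Bool} (h : k < level st b) :
    seat k st = b := by
  cases st with
  | nil => simp [level] at h
  | cons r st =>
    rw [level] at h
    split_ifs at h with hr
    · rw [seat, if_pos h, hr]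
    · omega

lemma seat_level {st : Stack} (hR : Reduced st) (hB : BallBottom st) {b : Bool}
    (h0 : st = [] → b = true) : seat (level st b) st = !b := by
  cases st with
  | nil => simp [seat, h0 rfl]
  | cons r st =>
    rw [level]
    split_ifs with hr
    · rw [seat, if_neg (lt_irrefl _), seat_tail hR hB le_rfl, hr]
    · rw [seat, if_pos r.length_pos]
      exact Bool.eq_not.2 hr

lemma Pushed.isSome_completed_iff {r : Run} {st : Stack} (h : Pushed (r :: st))
    (hB : BallBottom (r :: st)) :
    (completed (r :: st)).isSome ↔ seat r.length (r :: st) = r.letter := by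
  rw [seat, if_neg (lt_irrefl _)]
  match st, h with
  | [], _ =>
    have hb : r.letter = true := by simpa [BallBottom] using hB
    simp [completed, seat, hb]
  | q :: st, ⟨hne, hle, hst⟩ =>
    rw [completed, seat]
    split_ifs with hl hlt hlt
    · omega
    · simpa [seat_tail hst hB.tail hl.le] using (Bool.eq_not.2 hne).symm
    · simpa using hne.symm
    · omega

lemma isSome_completed_push_iff {st : Stack} (hR : Reduced st) (hB : BallBottom st)
    {a : ℤ × Bool} (h0 : st = [] → a.2 = true) :
    (completed (push st a)).isSome ↔ seat (level st a.2 + 1) st = a.2 := by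
  have hseat := seat_push (level st a.2 + 1) st a
  rw [if_neg (by omega)] at hseat
  rw [← hseat]
  have hP := hR.pushed a
  have hPB := hB.push h0
  obtain ⟨r, rest, hpush, -, hletter, hlength⟩ := exists_push_eq_cons st a
  rw [hpush] at hP hPB ⊢
  rw [hP.isSome_completed_iff hPB, hletter, hlength]

lemma mem_of_mem_cancel {r : Run} {st : Stack} (h : r ∈ cancel st) : r ∈ st := by
  match st, h with
  | [_], h => exact h
  | p :: q :: st, h =>
    rw [cancel] at h
    split_ifs at h
    · exact .tail _ (.tail _ h)
    · exact h

lemma Reduced.mem_push {r : Run} {st : Stack} {a : ℤ × Bool} (hR : Reduced st)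
    (hr : r ∈ push st a) :
    (r = .single a ∧ level st a.2 = 0) ∨
      (∃ q ∈ st, q.letter = a.2 ∧ level st a.2 = q.length ∧ r = q.snoc a.1) ∨
      (r ∈ st ∧ level st a.2 < r.length) := by
  cases st with
  | nil => exact .inl ⟨List.mem_singleton.1 hr, rfl⟩
  | cons q st =>
    rw [push] at hr
    rw [level]
    split_ifs at hr ⊢ with hq
    · have hlt : (q :: st).Pairwise fun r q => r.length < q.length :=
        List.isChain_iff_pairwise.1 (List.IsChain.imp (fun _ _ h => h.2) hR)
      rcases List.mem_cons.1 hr with rfl | hr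
      · exact .inr (.inl ⟨q, List.mem_cons_self, hq, rfl, rfl⟩)
      · exact .inr (.inr ⟨.tail _ hr, List.rel_of_pairwise_cons hlt hr⟩)
    · rcases List.mem_cons.1 hr with rfl | hr
      · exact .inl ⟨rfl, rfl⟩
      · exact .inr (.inr ⟨hr, r.length_pos⟩)

lemma exists_mem_push_mem_sites_iff {st : Stack} {a : ℤ × Bool} {x : ℤ} :
    (∃ r ∈ push st a, x ∈ r.sites) ↔ (∃ r ∈ st, x ∈ r.sites) ∨ x = a.1 := by
  cases st with
  | nil => simp [push, Run.single]
  | cons r st =>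
    rw [push]
    split_ifs
    · simp [Run.snoc, or_right_comm]
    · simp [Run.single, or_comm]

lemma solitons_append_singleton (st : Stack) (v : List (ℤ × Bool)) (a : ℤ × Bool) :
    solitons st (v ++ [a]) = solitons st v ++ (completed (push (v.foldl step st) a)).toList := by
  induction v generalizing st with
  | nil => simp [solitons]
  | cons b v ih => simp [solitons, ih]

/-! ### Agreement of the scan with the Takahashi–Satsuma algorithm -/

lemma word_push (st : Stack) (a : ℤ × Bool) : word (push st a) = word st ++ [a] := by
  cases st with
  | nil => simp [push, word]
  | cons r st =>
    rw [push]
    split_ifs with hr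
    · simp [word, hr]
    · simp [word]

lemma runsOf_word_append {r : Run} {st : Stack}
    (h : (r :: st).IsChain fun r q => r.letter ≠ q.letter) (v : List (ℤ × Bool)) :
    runsOf (word st ++ (r.word ++ v)) = (st.map Run.word).reverse ++ runsOf (r.word ++ v) := by
  induction st generalizing r v with
  | nil => rfl
  | cons q st ih =>
    obtain ⟨hne, hst⟩ := List.isChain_cons_cons.1 h
    rw [word, List.append_assoc, ih hst, runsOf_append, q.runsOf_word]
    · simp
    · intro a ha b hb
      rw [List.head?_append_of_ne_nil _ r.word_ne_nil] at hb
      rw [Run.snd_of_mem_word (List.mem_of_getLast? ha), Run.snd_of_mem_word (List.mem_of_head? hb)]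
      exact hne.symm

lemma Reduced.isChain_length {st : Stack} (h : Reduced st) :
    (st.map Run.word).reverse.IsChain fun a b => b.length < a.length := by
  rw [List.isChain_reverse, List.isChain_map]
  exact h.imp fun _ _ h => by simpa [Function.swap] using h.2

lemma Reduced.findSoliton_eq_none {st : Stack} (h : Reduced st) :
    findSoliton (runsOf (word st)) = none := by
  cases st with
  | nil => rfl
  | cons r st =>
    have hruns := runsOf_word_append (List.IsChain.imp (fun _ _ h => h.1) h) []
    rw [List.append_nil, r.runsOf_word] at hruns
    rw [word, hruns]
    exact BoxBall.findSoliton_eq_none (by simpa using h.isChain_length)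

lemma Reduced.findSoliton_eq_some {s : Soliton} {st : Stack} (h : Reduced (s.first :: st))
    (hne : s.second.letter ≠ s.first.letter) (hl : s.second.length = s.first.length)
    (v : List (ℤ × Bool)) :
    findSoliton (runsOf (word (s.second :: s.first :: st) ++ v)) = some s.word := by
  have hchain : (s.second :: s.first :: st).IsChain fun r q => r.letter ≠ q.letter :=
    List.isChain_cons_cons.2 ⟨hne, List.IsChain.imp (fun _ _ h => h.1) h⟩
  obtain ⟨t, rs, ht⟩ := s.second.exists_runsOf_word_append v
  have hL : ((st.map Run.word).reverse ++ [s.first.word]).IsChain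
      fun a b => b.length < a.length := by
    simpa using h.isChain_length
  rw [word, List.append_assoc, runsOf_word_append hchain, ht, List.map_cons, List.reverse_cons,
    List.append_assoc, List.singleton_append, findSoliton_append hL, findSoliton,
    if_pos (by simp [hl]), List.take_left' (by simp [hl]), Soliton.word]

lemma tsAux_word_append (v : List (ℤ × Bool)) (fuel : ℕ) {st : Stack} (hR : Reduced st)
    (hnodup : ((word st ++ v).map Prod.fst).Nodup) (hfuel : (word st ++ v).length ≤ fuel) :
    tsAux fuel (word st ++ v) = (solitons st v).map Soliton.word := by
  induction v generalizing fuel st with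
  | nil =>
    cases fuel with
    | zero => rfl
    | succ fuel => rw [List.append_nil, tsAux, hR.findSoliton_eq_none]; rfl
  | cons a v ih =>
    have hpush : word st ++ a :: v = word (push st a) ++ v := by simp [word_push]
    have hstep := hR.step a
    rw [hpush] at hnodup hfuel ⊢
    rw [solitons]
    cases hs : completed (push st a) with
    | none =>
      rw [step, cancel_of_completed_eq_none hs] at hstep ⊢
      exact ih fuel hstep hnodup hfuel
    | some s =>
      obtain ⟨rest, hpq, hl⟩ := completed_eq_some hs
      have hP := hR.pushed a
      rw [hpq] at hP hnodup hfuel ⊢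
      obtain ⟨hne, -, hst⟩ := hP
      have hrest : step st a = rest := by rw [step, hpq, cancel, if_pos hl]
      have hword : word (s.second :: s.first :: rest) ++ v = word rest ++ (s.word ++ v) := by
        simp [word, Soliton.word]
      have hfind := hst.findSoliton_eq_some hne hl v
      rw [hword] at hnodup hfuel hfind ⊢
      simp only [List.length_append] at hfuel
      have hs_pos := s.length_word_pos
      cases fuel with
      | zero => omega
      | succ fuel =>
        rw [tsAux, hfind, hrest]
        dsimp only
        rw [filter_not_contains_append hnodup, ih fuel (hrest ▸ hstep)]
        · rfl
        · exact hnodup.sublist (((List.sublist_append_right _ _).append_left _).map _)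
        · rw [List.length_append]
          omega

lemma tsSolitons_eq {w : List (ℤ × Bool)} (hw : (w.map Prod.fst).Nodup) :
    tsSolitons w = (solitons [] w).map Soliton.word :=
  tsAux_word_append w w.length .nil hw le_rfl

end Stack

/-! ### Walks -/

section IsLift

variable {η : Cfg} {ξ : ℤ → ℤ}

lemma sum_Icc_of_isLift (h : IsLift η ξ) {z x : ℤ} (hzx : z ≤ x) :
    ∑ y ∈ Finset.Icc z x, (2 * valZ (η y) - 1) = ξ x - ξ (z - 1) := by
  induction x, hzx using Int.leInduction with
  | base => simpa using (h z).symm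
  | succ x hzx ih =>
    have hIcc : Finset.Icc z (x + 1) = insert (x + 1) (Finset.Icc z x) := by
      ext
      simp only [Finset.mem_Icc, Finset.mem_insert]
      omega
    have hx := h (x + 1)
    rw [add_sub_cancel_right] at hx
    rw [hIcc, Finset.sum_insert (by simp), ih, ← hx]
    ring

lemma isRecord_iff_of_isLift (h : IsLift η ξ) (x : ℤ) :
    isRecord η x ↔ ∀ z < x, ξ x < ξ z := by
  have hsum {z : ℤ} (hz : z ≤ x) :
      ∑ y ∈ Finset.Icc z x, valZ (η y) - ∑ y ∈ Finset.Icc z x, (1 - valZ (η y)) =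
        ξ x - ξ (z - 1) := by
    rw [← sum_Icc_of_isLift h hz, ← Finset.sum_sub_distrib]
    exact Finset.sum_congr rfl fun _ _ => by ring
  constructor
  · intro hx z hz
    have h1 := hx (z + 1) hz
    have h2 := hsum (z := z + 1) hz
    rw [add_sub_cancel_right] at h2
    omega
  · intro hx z hz
    have h1 := hx (z - 1) (by omega)
    have h2 := hsum hz
    omega

lemma two_mul_sum_valR_of_isLift (h : IsLift η ξ) {z x : ℤ} (hzx : z ≤ x) :
    2 * ∑ y ∈ Finset.Icc z x, valR (η y) - (x + 1 - z : ℝ) = (ξ x : ℝ) - ξ (z - 1) := by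
  have hcard : ((Finset.Icc z x).card : ℝ) = x + 1 - z := by
    exact_mod_cast Int.card_Icc_of_le z x (by omega)
  have hval (b : Bool) : valR b = valZ b := by cases b <;> simp [valR, valZ]
  rw [← Int.cast_sub, ← sum_Icc_of_isLift h hzx, ← hcard]
  simp [hval, Finset.mul_sum, -Int.card_Icc]

lemma recPos_zero_of_forall_lt (h : ξ 0 = 0 ∧ ∀ x < 0, ξ x ≠ 0) : recPos ξ 0 = 0 := by
  have hleast : IsLeast {x : ℤ | ξ x = -0} 0 :=
    ⟨by simp [h.1], fun x hx => not_lt.1 fun hlt => h.2 x hlt (by simpa using hx)⟩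
  exact hleast.csInf_eq

end IsLift

lemma tendsto_two_mul_sub_atBot {s : ℕ → ℝ} {l : ℝ} (hl : l < 1 / 2)
    (h : Tendsto (fun y : ℕ => s y / (y : ℝ)) atTop (nhds l)) :
    Tendsto (fun y : ℕ => 2 * s y - y) atTop atBot := by
  have hlim : Tendsto (fun y : ℕ => 2 * (s y / (y : ℝ)) - 1) atTop (nhds (2 * l - 1)) :=
    (h.const_mul 2).sub_const 1
  refine (tendsto_natCast_atTop_atTop.atTop_mul_neg (by linarith) hlim).congr' ?_
  filter_upwards [eventually_gt_atTop 0] with y hy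
  field_simp

/-- A walk lift of `η` that comes down from `+∞` and has no lower bound, so that its records are
unbounded in both directions. -/
structure DescendingLift (η : Cfg) (ξ : ℤ → ℤ) : Prop where
  isLift : IsLift η ξ
  tendsto_atBot : Tendsto ξ atBot atTop
  not_bddBelow : ¬ BddBelow (Set.range ξ)

namespace DescendingLift

variable {η : Cfg} {ξ : ℤ → ℤ}

lemma of_inX (hη : inX η) (hlift : IsLift η ξ) : DescendingLift η ξ := by
  obtain ⟨l, -, hl, hleft, hright⟩ := hη
  refine ⟨hlift, tendsto_atTop.2 fun C => ?_, fun ⟨C, hC⟩ => ?_⟩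
  · obtain ⟨N, hN⟩ := eventually_atTop.1
      ((tendsto_two_mul_sub_atBot hl hleft).eventually_le_atBot (ξ 0 - C : ℝ))
    filter_upwards [eventually_le_atBot (-(N : ℤ) - 1)] with x hx
    obtain ⟨y, rfl⟩ : ∃ y : ℕ, x = -(y : ℤ) - 1 := ⟨(-x - 1).toNat, by omega⟩
    have hy := hN y (by omega)
    have hsum := two_mul_sum_valR_of_isLift hlift (show -(y : ℤ) ≤ 0 by omega)
    push_cast at hsum
    have : (C : ℝ) ≤ ξ (-(y : ℤ) - 1) := by linarith
    exact_mod_cast this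
  · obtain ⟨y, hy⟩ :=
      ((tendsto_two_mul_sub_atBot hl hright).eventually_le_atBot (C - ξ (-1) : ℝ)).exists
    have hsum := two_mul_sum_valR_of_isLift hlift (show 0 ≤ (y : ℤ) by omega)
    push_cast at hsum
    have hlt : (ξ y : ℝ) < C := by linarith
    have hge : C ≤ ξ y := hC ⟨y, rfl⟩
    exact absurd (by exact_mod_cast hlt : ξ y < C) hge.not_gt

variable (h : DescendingLift η ξ)
include h

lemma isRecord_iff (x : ℤ) : isRecord η x ↔ ∀ z < x, ξ x < ξ z :=
  isRecord_iff_of_isLift h.isLift x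

lemma exists_isRecord_apply_eq (C : ℤ) : ∃ y, isRecord η y ∧ ξ y = C := by
  obtain ⟨N, hN⟩ := eventually_atBot.1 (h.tendsto_atBot.eventually_gt_atTop C)
  obtain ⟨_, ⟨x, rfl⟩, hx⟩ := not_bddBelow_iff.1 h.not_bddBelow C
  obtain ⟨y, hy, hmin⟩ := Int.exists_least_of_bdd (P := fun y => ξ y ≤ C)
    ⟨N, fun z hz => le_of_lt <| not_le.1 fun hzN => (hN z hzN).not_ge hz⟩ ⟨x, hx.le⟩
  have hbefore {z : ℤ} (hz : z < y) : C < ξ z := not_le.1 fun hle => (hmin z hle).not_gt hz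
  refine ⟨y, (h.isRecord_iff y).2 fun z hz => hy.trans_lt (hbefore hz), hy.antisymm ?_⟩
  have hprev := hbefore (sub_one_lt y)
  have hstep := h.isLift y
  cases hb : η y <;> simp only [hb, valZ] at hstep <;> omega

lemma exists_isRecord_le (x : ℤ) : ∃ y ≤ x, isRecord η y := by
  obtain ⟨y, hy, hxy⟩ := h.exists_isRecord_apply_eq (ξ x)
  exact ⟨y, not_lt.1 fun hlt => ((h.isRecord_iff y).1 hy x hlt).ne hxy, hy⟩

lemma bddBelow_image_Iic (x : ℤ) : BddBelow (ξ '' Set.Iic x) := by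
  obtain ⟨N, hN⟩ := eventually_atBot.1 (h.tendsto_atBot.eventually_ge_atTop 0)
  have hsub : ξ '' Set.Iic x ⊆ ξ '' Set.Iic N ∪ ξ '' Set.Icc N x := by
    rw [← Set.image_union]
    exact Set.image_mono fun z hz => (le_total z N).imp id fun hNz => ⟨hNz, hz⟩
  have hleft : BddBelow (ξ '' Set.Iic N) := ⟨0, Set.forall_mem_image.2 fun z hz => hN z hz⟩
  exact (hleft.union ((Set.finite_Icc N x).image ξ).bddBelow).mono hsub

lemma exists_isRecord_gt (x : ℤ) : ∃ y > x, isRecord η y := by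
  obtain ⟨C, hC⟩ := h.bddBelow_image_Iic x
  obtain ⟨y, hy, hyC⟩ := h.exists_isRecord_apply_eq (C - 1)
  refine ⟨y, not_le.1 fun hyx => ?_, hy⟩
  have := hC ⟨y, hyx, rfl⟩
  omega

lemma isRecord_recPos_and_apply (j : ℤ) : isRecord η (recPos ξ j) ∧ ξ (recPos ξ j) = -j := by
  obtain ⟨y, hy, hyj⟩ := h.exists_isRecord_apply_eq (-j)
  have hleast : IsLeast {x : ℤ | ξ x = -j} y :=
    ⟨hyj, fun x (hx : ξ x = -j) => not_lt.1 fun hlt =>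
      ((h.isRecord_iff y).1 hy x hlt).ne (hyj.trans hx.symm)⟩
  rw [show recPos ξ j = y from hleast.csInf_eq]
  exact ⟨hy, hyj⟩

lemma eq_false_of_isRecord {x : ℤ} (hx : isRecord η x) : η x = false := by
  have hlt := (h.isRecord_iff x).1 hx (x - 1) (sub_one_lt x)
  have hstep := h.isLift x
  cases hb : η x
  · rfl
  · simp only [hb, valZ, if_true] at hstep
    omega

lemma eq_true_of_not_isRecord {x : ℤ} (hx : ¬ isRecord η x)
    (hmin : ξ (x - 1) ∈ lowerBounds (ξ '' Set.Iic (x - 1))) : η x = true := by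
  by_contra hb
  refine hx ((h.isRecord_iff x).2 fun z hz => ?_)
  have hstep := h.isLift x
  simp only [hb, valZ, if_false] at hstep
  have := hmin ⟨z, Int.le_sub_one_of_lt hz, rfl⟩
  omega

end DescendingLift

/-! ### The scan along the line -/

/-- The last record at or before `x` (a junk value if there is none). -/
noncomputable def lastRecord (η : Cfg) (x : ℤ) : ℤ := sSup {y | y ≤ x ∧ isRecord η y}

/-- The runs pending after the scan of an excursion of `η` has read the site `x`. -/
noncomputable def stackAt (η : Cfg) (x : ℤ) : Stack :=
  (excursionWord η (lastRecord η x) (x + 1)).foldl Stack.step []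

/-- The runs at the moment the letter at `x` has been read and no soliton has been removed. -/
noncomputable def pushAt (η : Cfg) (x : ℤ) : Stack := (stackAt η (x - 1)).push (x, η x)

/-- The slot level of a site `x`, for `x` not a record. -/
noncomputable def level (η : Cfg) (x : ℤ) : ℕ := (stackAt η (x - 1)).level (η x)

lemma excursionWord_self_add_one (η : Cfg) (y : ℤ) : excursionWord η y (y + 1) = [] := by
  simp [excursionWord]

lemma excursionWord_add_one (η : Cfg) {y z : ℤ} (hyz : y < z) :
    excursionWord η y (z + 1) = excursionWord η y z ++ [(z, η z)] := by
  obtain ⟨n, rfl⟩ : ∃ n : ℕ, z = y + 1 + n := ⟨(z - y - 1).toNat, by omega⟩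
  have hn : y + 1 + (n : ℤ) - y - 1 = n := by ring
  have hn' : y + 1 + (n : ℤ) + 1 - y - 1 = (n + 1 : ℕ) := by push_cast; ring
  simp only [excursionWord, hn, hn', Int.toNat_natCast, List.range_succ]
  simp

lemma lastRecord_of_isRecord {η : Cfg} {x : ℤ} (hx : isRecord η x) : lastRecord η x = x :=
  IsGreatest.csSup_eq (s := {y | y ≤ x ∧ isRecord η y}) ⟨⟨le_rfl, hx⟩, fun _ hy => hy.1⟩

lemma lastRecord_of_not_isRecord {η : Cfg} {x : ℤ} (hx : ¬ isRecord η x) :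
    lastRecord η x = lastRecord η (x - 1) := by
  have hset : {y | y ≤ x ∧ isRecord η y} = {y | y ≤ x - 1 ∧ isRecord η y} := by
    ext y
    refine and_congr_left fun hy => ?_
    rw [Int.le_sub_one_iff, le_iff_lt_or_eq, or_iff_left]
    rintro rfl
    exact hx hy
  rw [lastRecord, hset, lastRecord]

lemma stackAt_of_isRecord {η : Cfg} {x : ℤ} (hx : isRecord η x) : stackAt η x = [] := by
  rw [stackAt, lastRecord_of_isRecord hx, excursionWord_self_add_one, List.foldl_nil]

namespace DescendingLift

variable {η : Cfg} {ξ : ℤ → ℤ} (h : DescendingLift η ξ)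
include h

lemma isGreatest_lastRecord (x : ℤ) :
    IsGreatest {y | y ≤ x ∧ isRecord η y} (lastRecord η x) :=
  have hbdd : BddAbove {y | y ≤ x ∧ isRecord η y} := ⟨x, fun _ hy => hy.1⟩
  ⟨Int.csSup_mem (h.exists_isRecord_le x) hbdd, fun _ hy => le_csSup hbdd hy⟩

lemma stackAt_of_not_isRecord {x : ℤ} (hx : ¬ isRecord η x) :
    stackAt η x = (pushAt η x).cancel := by
  have hlt : lastRecord η (x - 1) < x := by
    have := (h.isGreatest_lastRecord (x - 1)).1.1
    omega
  rw [stackAt, lastRecord_of_not_isRecord hx, excursionWord_add_one η hlt, List.foldl_append,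
    pushAt, stackAt, sub_add_cancel]
  rfl

lemma record_induction {P : ℤ → Prop} (isRecord : ∀ x, isRecord η x → P x)
    (not_isRecord : ∀ x, ¬ _root_.isRecord η x → P (x - 1) → P x) (x : ℤ) : P x := by
  obtain ⟨y, hyx, hy⟩ := h.exists_isRecord_le x
  induction x, hyx using Int.leInduction with
  | base => exact isRecord y hy
  | succ x _ ih =>
    by_cases hx : _root_.isRecord η (x + 1)
    · exact isRecord _ hx
    · exact not_isRecord _ hx (by simpa using ih)

lemma reduced_stackAt (x : ℤ) : (stackAt η x).Reduced := by
  induction x using h.record_induction with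
  | isRecord x hx =>
    rw [stackAt_of_isRecord hx]
    exact .nil
  | not_isRecord x hx ih =>
    rw [h.stackAt_of_not_isRecord hx]
    exact ih.step _

lemma pushed_pushAt (x : ℤ) : (pushAt η x).Pushed := (h.reduced_stackAt (x - 1)).pushed _

lemma ballBottom_stackAt_and_isLeast (x : ℤ) :
    (stackAt η x).BallBottom ∧ IsLeast (ξ '' Set.Iic x) (ξ x - (stackAt η x).height) := by
  induction x using h.record_induction with
  | isRecord x hx =>
    rw [stackAt_of_isRecord hx]
    refine ⟨by simp [Stack.BallBottom], ⟨x, Set.self_mem_Iic, by simp [Stack.height]⟩, ?_⟩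
    rintro _ ⟨z, hz, rfl⟩
    simpa [Stack.height] using hz.eq_or_lt.elim (fun e => e ▸ le_rfl)
      fun hlt => ((h.isRecord_iff x).1 hx z hlt).le
  | not_isRecord x hx ih =>
    obtain ⟨hB, ⟨m, hm, hmin⟩, hlow⟩ := ih
    have hstep := h.isLift x
    have hnil (hnil : stackAt η (x - 1) = []) : η x = true :=
      h.eq_true_of_not_isRecord hx (by simpa [hnil, Stack.height] using hlow)
    have hPB := hB.push (a := (x, η x)) hnil
    have hheight : (stackAt η x).height = (stackAt η (x - 1)).height + (2 * valZ (η x) - 1) := by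
      rw [h.stackAt_of_not_isRecord hx, (h.pushed_pushAt x).height_cancel, pushAt,
        Stack.height_push]
    have hB' : (stackAt η x).BallBottom := h.stackAt_of_not_isRecord hx ▸ hPB.cancel
    have hnonneg := Stack.height_nonneg (h.reduced_stackAt x) hB'
    refine ⟨hB', ⟨m, (sub_one_lt x).le.trans' hm, by omega⟩, ?_⟩
    rintro _ ⟨z, hz, rfl⟩
    rcases (Set.mem_Iic.1 hz).eq_or_lt with rfl | hz
    · omega
    · have := hlow ⟨z, Int.le_sub_one_of_lt hz, rfl⟩
      omega

lemma ballBottom_stackAt (x : ℤ) : (stackAt η x).BallBottom :=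
  (h.ballBottom_stackAt_and_isLeast x).1

lemma eq_true_of_stackAt_eq_nil {x : ℤ} (hx : ¬ isRecord η x) (hnil : stackAt η (x - 1) = []) :
    η x = true :=
  h.eq_true_of_not_isRecord hx
    (by simpa [hnil, Stack.height] using (h.ballBottom_stackAt_and_isLeast (x - 1)).2.2)

lemma stackAt_sub_one_of_isRecord {x : ℤ} (hx : isRecord η x) : stackAt η (x - 1) = [] := by
  obtain ⟨hB, ⟨m, hm, hmin⟩, -⟩ := h.ballBottom_stackAt_and_isLeast (x - 1)
  have hlt := (h.isRecord_iff x).1 hx m (Int.lt_of_le_sub_one hm)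
  have hstep := h.isLift x
  rw [h.eq_false_of_isRecord hx] at hstep
  have hR := h.reduced_stackAt (x - 1)
  cases hst : stackAt η (x - 1) with
  | nil => rfl
  | cons r st =>
    rw [hst] at hR hB hmin
    have hpos := (Stack.height_pos hR hB).1
    simp only [valZ] at hstep
    omega

end DescendingLift

/-! ### Slots and solitons -/

/-- `x` is a record or a site of slot level at least `k`; see `isKSlot_iff`. -/
def Slot (η : Cfg) (k : ℕ) (x : ℤ) : Prop := isRecord η x ∨ k ≤ level η x

/-- What is known of a pending run `r` of the scan of `η` up to the site `x`: it is made of one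
site of each level below its length, in this order, and every site read after its first one is
of level below its length. -/
structure Run.IsPending (η : Cfg) (x : ℤ) (r : Run) : Prop where
  letter_eq : ∀ u ∈ r.sites, η u = r.letter
  le : ∀ u ∈ r.sites, u ≤ x
  not_slot : ∀ u ∈ r.sites, ∀ w, u ≤ w → w ≤ x → ¬ Slot η r.length w
  strictMonoOn_level : StrictMonoOn (level η) {u | u ∈ r.sites}
  map_level : r.sites.map (level η) = List.range r.length

namespace Run.IsPending

variable {η : Cfg} {x : ℤ} {r : Run}

lemma extend (h : r.IsPending η (x - 1)) (hx : ¬ Slot η r.length x) : r.IsPending η x where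
  letter_eq := h.letter_eq
  le u hu := (h.le u hu).trans (sub_one_lt x).le
  not_slot u hu w huw hwx := by
    rcases hwx.eq_or_lt with rfl | hwx
    · exact hx
    · exact h.not_slot u hu w huw (Int.le_sub_one_of_lt hwx)
  strictMonoOn_level := h.strictMonoOn_level
  map_level := h.map_level

lemma single (hx : ¬ isRecord η x) (hlevel : level η x = 0) :
    (Run.single (x, η x)).IsPending η x where
  letter_eq u hu := by
    rw [List.mem_singleton.1 hu]
    rfl
  le u hu := (List.mem_singleton.1 hu).le
  not_slot u hu w huw hwx := by
    obtain rfl : w = x := hwx.antisymm ((List.mem_singleton.1 hu).ge.trans huw)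
    simp [Slot, hx, hlevel]
  strictMonoOn_level := by simp [Run.single]
  map_level := by simp [Run.single, Run.length, hlevel]

lemma snoc (h : r.IsPending η (x - 1)) (hx : ¬ isRecord η x) (hletter : r.letter = η x)
    (hlevel : level η x = r.length) : (r.snoc x).IsPending η x where
  letter_eq u hu := by
    rcases List.mem_append.1 hu with hu | hu
    · exact h.letter_eq u hu
    · rw [List.mem_singleton.1 hu, ← hletter]
      rfl
  le u hu := by
    rcases List.mem_append.1 hu with hu | hu
    · exact (h.le u hu).trans (sub_one_lt x).le
    · exact (List.mem_singleton.1 hu).le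
  not_slot u hu w huw hwx := by
    rw [Run.length_snoc]
    rcases hwx.eq_or_lt with rfl | hwx
    · simp [Slot, hx, hlevel]
    · rcases List.mem_append.1 hu with hu | hu
      · have := h.not_slot u hu w huw (Int.le_sub_one_of_lt hwx)
        exact fun hw => this (hw.imp_right (Nat.le_succ _).trans)
      · exact absurd hwx ((List.mem_singleton.1 hu).ge.trans huw).not_gt
  strictMonoOn_level u hu v hv huv := by
    rcases List.mem_append.1 hv with hv | hv
    · rcases List.mem_append.1 hu with hu | hu
      · exact h.strictMonoOn_level hu hv huv
      · have := h.le v hv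
        have := List.mem_singleton.1 hu
        omega
    · obtain rfl := List.mem_singleton.1 hv
      rcases List.mem_append.1 hu with hu | hu
      · have := h.not_slot u hu u le_rfl (h.le u hu)
        rw [hlevel]
        exact not_le.1 fun hle => this (.inr hle)
      · exact absurd huv (List.mem_singleton.1 hu).not_lt
  map_level := by
    rw [Run.length_snoc, List.range_succ, ← h.map_level, ← hlevel]
    simp [Run.snoc]

lemma card_filter_le (h : r.IsPending η x) {u : ℤ} (hu : u ∈ r.sites) :
    (r.sites.toFinset.filter (· ≤ u)).card = level η u + 1 := by
  rw [← Finset.card_range (level η u + 1)]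
  refine Finset.card_nbij (level η) (fun v hv => ?_) (fun v hv w hw => ?_) fun n hn => ?_
  · obtain ⟨hv, hvu⟩ : v ∈ r.sites ∧ v ≤ u := by simpa using hv
    exact Finset.mem_range_succ_iff.2 ((h.strictMonoOn_level.le_iff_le hv hu).2 hvu)
  · exact h.strictMonoOn_level.injOn (by simp_all) (by simp_all)
  · have hlt : level η u < r.length := by
      rw [← List.mem_range, ← h.map_level]
      exact List.mem_map_of_mem hu
    have hn : n ≤ level η u := by simpa using hn
    obtain ⟨v, hv, rfl⟩ : ∃ v ∈ r.sites, level η v = n := by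
      rw [← List.mem_map, h.map_level, List.mem_range]
      exact hn.trans_lt hlt
    exact ⟨v, by simpa [hv] using (h.strictMonoOn_level.le_iff_le hv hu).1 hn, rfl⟩

end Run.IsPending

namespace DescendingLift

variable {η : Cfg} {ξ : ℤ → ℤ} (h : DescendingLift η ξ)
include h

lemma isPending_of_mem_pushAt_of_forall {x : ℤ} (hx : ¬ isRecord η x)
    (hst : ∀ r ∈ stackAt η (x - 1), r.IsPending η (x - 1)) :
    ∀ r ∈ pushAt η x, r.IsPending η x := by
  intro r hr
  rcases (h.reduced_stackAt (x - 1)).mem_push hr with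
    ⟨rfl, hlevel⟩ | ⟨q, hq, hletter, hlevel, rfl⟩ | ⟨hr, hlt⟩
  · exact .single hx hlevel
  · exact (hst q hq).snoc hx hletter hlevel
  · exact (hst r hr).extend fun hslot => hslot.elim hx hlt.not_ge

lemma isPending_of_mem_stackAt (x : ℤ) : ∀ r ∈ stackAt η x, r.IsPending η x := by
  induction x using h.record_induction with
  | isRecord x hx => simp [stackAt_of_isRecord hx]
  | not_isRecord x hx ih =>
    rw [h.stackAt_of_not_isRecord hx]
    exact fun r hr => h.isPending_of_mem_pushAt_of_forall hx ih r (Stack.mem_of_mem_cancel hr)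

lemma isPending_of_mem_pushAt {x : ℤ} (hx : ¬ isRecord η x) :
    ∀ r ∈ pushAt η x, r.IsPending η x :=
  h.isPending_of_mem_pushAt_of_forall hx (h.isPending_of_mem_stackAt (x - 1))

lemma not_isRecord_of_completed {z : ℤ} {s : Soliton}
    (hs : (pushAt η z).completed = some s) : ¬ isRecord η z := by
  intro hz
  rw [pushAt, h.stackAt_sub_one_of_isRecord hz] at hs
  simp [Stack.push, Stack.completed] at hs

end DescendingLift

/-- What is known of the soliton `s` that the scan of `η` completes on reading the site `z`. -/
structure Soliton.IsCompletedAt (η : Cfg) (z : ℤ) (s : Soliton) : Prop where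
  first : s.first.IsPending η z
  second : s.second.IsPending η z
  length_first : s.first.length = level η z + 1
  length_second : s.second.length = level η z + 1
  letter_ne : s.second.letter ≠ s.first.letter
  mem : z ∈ s.second.sites

namespace Soliton.IsCompletedAt

variable {η : Cfg} {z u : ℤ} {s : Soliton} (h : s.IsCompletedAt η z)
include h

lemma mem_sites_self : z ∈ s.sites := Soliton.mem_sites.2 (.inr h.mem)

lemma le (hu : u ∈ s.sites) : u ≤ z :=
  (Soliton.mem_sites.1 hu).elim (h.first.le u) (h.second.le u)

lemma not_slot (hu : u ∈ s.sites) {w : ℤ} (huw : u ≤ w) (hwz : w ≤ z) :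
    ¬ Slot η (level η z + 1) w := by
  rcases Soliton.mem_sites.1 hu with hu | hu
  · exact h.length_first ▸ h.first.not_slot u hu w huw hwz
  · exact h.length_second ▸ h.second.not_slot u hu w huw hwz

lemma filter_eq_letter :
    s.sites.filter (η · = s.first.letter) = s.first.sites.toFinset ∧
      s.sites.filter (η · = s.second.letter) = s.second.sites.toFinset := by
  constructor <;> ext v <;>
    simp only [Finset.mem_filter, Soliton.mem_sites, List.mem_toFinset] <;> constructor
  · rintro ⟨hv | hv, hletter⟩
    · exact hv
    · exact absurd ((h.second.letter_eq v hv).symm.trans hletter) h.letter_ne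
  · exact fun hv => ⟨.inl hv, h.first.letter_eq v hv⟩
  · rintro ⟨hv | hv, hletter⟩
    · exact absurd (hletter.symm.trans (h.first.letter_eq v hv)) h.letter_ne
    · exact hv
  · exact fun hv => ⟨.inr hv, h.second.letter_eq v hv⟩

lemma card_filter_le (hu : u ∈ s.sites) :
    ((s.sites.filter (η · = η u)).filter (· ≤ u)).card = level η u + 1 := by
  rcases Soliton.mem_sites.1 hu with hu | hu
  · rw [h.first.letter_eq u hu, h.filter_eq_letter.1, h.first.card_filter_le hu]
  · rw [h.second.letter_eq u hu, h.filter_eq_letter.2, h.second.card_filter_le hu]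

end Soliton.IsCompletedAt

lemma nodup_map_fst_excursionWord (η : Cfg) (y z : ℤ) :
    ((excursionWord η y z).map Prod.fst).Nodup := by
  have hsites : (excursionWord η y z).map Prod.fst =
      (List.range (z - y - 1).toNat).map fun n : ℕ => y + 1 + (n : ℤ) := by
    simp [excursionWord, ← List.map_eq_flatMap]
  rw [hsites]
  exact List.nodup_range.map fun m n hmn => by simpa using hmn

lemma stackAt_sub_one_of_forall {η : Cfg} {y z : ℤ} (hy : isRecord η y) (hyz : y < z)
    (hno : ∀ w, y < w → w < z → ¬ isRecord η w) :
    stackAt η (z - 1) = (excursionWord η y z).foldl Stack.step [] := by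
  have hgreatest : IsGreatest {w | w ≤ z - 1 ∧ isRecord η w} y :=
    ⟨⟨by omega, hy⟩, fun w hw => not_lt.1 fun hlt => hno w hlt (Int.lt_of_le_sub_one hw.1) hw.2⟩
  rw [stackAt, show lastRecord η (z - 1) = y from hgreatest.csSup_eq, sub_add_cancel]

lemma mem_solitons_excursionWord {η : Cfg} {y z : ℤ} {s : Soliton} (hy : isRecord η y)
    (hyz : y + 1 ≤ z) (hno : ∀ w, y < w → w < z → ¬ isRecord η w) :
    s ∈ Stack.solitons [] (excursionWord η y z) ↔
      ∃ w, y < w ∧ w < z ∧ (pushAt η w).completed = some s := by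
  induction z, hyz using Int.leInduction with
  | base =>
    simp only [excursionWord_self_add_one, Stack.solitons, List.not_mem_nil, false_iff]
    rintro ⟨w, h1, h2, -⟩
    omega
  | succ z hyz ih =>
    have hno' : ∀ w, y < w → w < z → ¬ isRecord η w := fun w h1 h2 => hno w h1 (by omega)
    rw [excursionWord_add_one η hyz, Stack.solitons_append_singleton, List.mem_append, ih hno',
      ← stackAt_sub_one_of_forall hy hyz hno', Option.mem_toList, ← pushAt]
    constructor
    · rintro (⟨w, h1, h2, hs⟩ | hs)
      · exact ⟨w, h1, by omega, hs⟩
      · exact ⟨z, hyz, by omega, hs⟩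
    · rintro ⟨w, h1, h2, hs⟩
      rcases (Int.lt_add_one_iff.1 h2).lt_or_eq with hlt | rfl
      · exact .inl ⟨w, h1, hlt, hs⟩
      · exact .inr hs

namespace DescendingLift

variable {η : Cfg} {ξ : ℤ → ℤ} (h : DescendingLift η ξ)
include h

lemma isCompletedAt {z : ℤ} {s : Soliton} (hs : (pushAt η z).completed = some s) :
    s.IsCompletedAt η z := by
  have hpending := h.isPending_of_mem_pushAt (h.not_isRecord_of_completed hs)
  obtain ⟨rest, hpush, hl⟩ := Stack.completed_eq_some hs
  obtain ⟨r, rest', hpush', hmem, -, hlength⟩ :=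
    (stackAt η (z - 1)).exists_push_eq_cons (z, η z)
  have hP := h.pushed_pushAt z
  obtain ⟨rfl, rfl⟩ := List.cons.inj (hpush.symm.trans hpush')
  rw [hpush] at hpending hP
  exact ⟨hpending _ (by simp), hpending _ (by simp), hl.symm.trans hlength, hlength, hP.1, hmem⟩

lemma exists_isRecord_gt_forall (y : ℤ) :
    ∃ z > y, isRecord η z ∧ ∀ w, y < w → w < z → ¬ isRecord η w := by
  obtain ⟨z, ⟨hyz, hz⟩, hmin⟩ := Int.exists_least_of_bdd (P := fun z => y < z ∧ isRecord η z)
    ⟨y, fun z hz => hz.1.le⟩ (h.exists_isRecord_gt y)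
  exact ⟨z, hyz, hz, fun w hyw hwz hw => (hmin w ⟨hyw, hw⟩).not_gt hwz⟩

lemma mem_Gamma_iff {k : ℕ} {γ : Finset ℤ} :
    γ ∈ Gamma η k ↔
      ∃ z s, (pushAt η z).completed = some s ∧ level η z + 1 = k ∧ γ = s.sites := by
  have hlength {z : ℤ} {s : Soliton} (hs : (pushAt η z).completed = some s) :
      s.word.length = 2 * k ↔ level η z + 1 = k := by
    have hz := h.isCompletedAt hs
    simp only [Soliton.word, List.length_append, Run.length_word, hz.length_first,
      hz.length_second]
    omega
  constructor
  · rintro ⟨y, y', hyy', hy, -, hno, w, hw, hk, rfl⟩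
    rw [Stack.tsSolitons_eq (nodup_map_fst_excursionWord η y y')] at hw
    obtain ⟨s, hs, rfl⟩ := List.mem_map.1 hw
    obtain ⟨z, -, -, hs⟩ := (mem_solitons_excursionWord hy hyy' hno).1 hs
    exact ⟨z, s, hs, (hlength hs).1 hk, s.toFinset_map_fst_word⟩
  · rintro ⟨z, s, hs, hk, rfl⟩
    obtain ⟨⟨hyz, hy⟩, hgreatest⟩ := h.isGreatest_lastRecord z
    have hz := h.not_isRecord_of_completed hs
    have hyz : lastRecord η z < z := hyz.lt_of_ne fun heq => hz (heq ▸ hy)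
    obtain ⟨y', hzy', hy', hno⟩ := h.exists_isRecord_gt_forall z
    have hno' (w : ℤ) (hyw : lastRecord η z < w) (hwy' : w < y') : ¬ isRecord η w := fun hw =>
      (le_or_gt w z).elim (fun hwz => (hgreatest ⟨hwz, hw⟩).not_gt hyw)
        fun hzw => hno w hzw hwy' hw
    refine ⟨lastRecord η z, y', hyz.trans hzy', hy, hy', hno', s.word, ?_, (hlength hs).2 hk,
      s.toFinset_map_fst_word.symm⟩
    rw [Stack.tsSolitons_eq (nodup_map_fst_excursionWord η _ _)]
    exact List.mem_map_of_mem ((mem_solitons_excursionWord hy (hyz.trans hzy') hno').2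
      ⟨z, hyz, hzy', hs⟩)

lemma mem_stackAt_or_mem_soliton {x y : ℤ} (hxy : x ≤ y)
    (hno : ∀ w, x ≤ w → w ≤ y → ¬ isRecord η w) :
    (∃ r ∈ stackAt η y, x ∈ r.sites) ∨ ∃ z s, (pushAt η z).completed = some s ∧ x ∈ s.sites := by
  have key {z : ℤ} (hz : ¬ isRecord η z)
      (hx : (∃ r ∈ stackAt η (z - 1), x ∈ r.sites) ∨ x = z) :
      (∃ r ∈ stackAt η z, x ∈ r.sites) ∨
        ∃ z s, (pushAt η z).completed = some s ∧ x ∈ s.sites := by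
    obtain ⟨r, hr, hxr⟩ := Stack.exists_mem_push_mem_sites_iff (a := (z, η z)).2 hx
    rw [h.stackAt_of_not_isRecord hz]
    cases hs : (pushAt η z).completed with
    | none =>
      rw [Stack.cancel_of_completed_eq_none hs]
      exact .inl ⟨r, hr, hxr⟩
    | some s =>
      obtain ⟨rest, hpush, hl⟩ := Stack.completed_eq_some hs
      rw [← pushAt, hpush] at hr
      rw [hpush, Stack.cancel, if_pos hl]
      rcases List.mem_cons.1 hr with rfl | hr
      · exact .inr ⟨z, s, hs, Soliton.mem_sites.2 (.inr hxr)⟩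
      rcases List.mem_cons.1 hr with rfl | hr
      · exact .inr ⟨z, s, hs, Soliton.mem_sites.2 (.inl hxr)⟩
      · exact .inl ⟨r, hr, hxr⟩
  induction y, hxy using Int.leInduction with
  | base => exact key (hno x le_rfl le_rfl) (.inr rfl)
  | succ y hxy ih =>
    rcases ih fun w h1 h2 => hno w h1 (by omega) with hx | hx
    · exact key (hno _ (by omega) le_rfl) (.inl (by rwa [add_sub_cancel_right]))
    · exact .inr hx

lemma exists_soliton_of_not_isRecord {x : ℤ} (hx : ¬ isRecord η x) :
    ∃ z s, (pushAt η z).completed = some s ∧ x ∈ s.sites := by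
  obtain ⟨y, hxy, hy, hno⟩ := h.exists_isRecord_gt_forall x
  have hno' (w : ℤ) (hxw : x ≤ w) (hwy : w ≤ y - 1) : ¬ isRecord η w := by
    rcases hxw.eq_or_lt with rfl | hxw
    · exact hx
    · exact hno w hxw (by omega)
  simpa [h.stackAt_sub_one_of_isRecord hy] using
    h.mem_stackAt_or_mem_soliton (Int.le_sub_one_of_lt hxy) hno'

theorem isKSlot_iff {k : ℕ} {x : ℤ} : IsKSlot η k x ↔ Slot η k x := by
  refine ⟨?_, fun hx => ?_⟩
  · have hlevel {m : ℕ} {γ : Finset ℤ} (hγ : γ ∈ Gamma η m) (hx : x ∈ γ)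
        (hcard : k < ((γ.filter (η · = η x)).filter (· ≤ x)).card) : k ≤ level η x := by
      obtain ⟨z, s, hs, -, rfl⟩ := h.mem_Gamma_iff.1 hγ
      rw [(h.isCompletedAt hs).card_filter_le hx] at hcard
      exact Nat.lt_succ_iff.1 hcard
    refine Or.imp_right ?_
    rintro ⟨m, γ, hγ, ⟨hx, hcard⟩ | ⟨hx, hcard⟩⟩ <;> obtain ⟨hx, hb⟩ := Finset.mem_filter.1 hx <;>
      exact hlevel hγ hx (by rwa [hb])
  · by_cases hrec : isRecord η x
    · exact .inl hrec
    obtain ⟨z, s, hs, hxs⟩ := h.exists_soliton_of_not_isRecord hrec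
    refine .inr ⟨level η z + 1, s.sites, h.mem_Gamma_iff.2 ⟨z, s, hs, rfl, rfl⟩, ?_⟩
    have hcard : k < ((s.sites.filter (η · = η x)).filter (· ≤ x)).card := by
      rw [(h.isCompletedAt hs).card_filter_le hxs]
      exact Nat.lt_succ_iff.2 (hx.resolve_left hrec)
    cases hb : η x <;> rw [hb] at hcard
    · exact .inl ⟨Finset.mem_filter.2 ⟨hxs, hb⟩, hcard⟩
    · exact .inr ⟨Finset.mem_filter.2 ⟨hxs, hb⟩, hcard⟩

end DescendingLift

/-! ### Letters of consecutive slots -/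

lemma Slot.of_succ {η : Cfg} {k : ℕ} {x : ℤ} (hx : Slot η (k + 1) x) : Slot η k x :=
  hx.imp_right k.le_succ.trans

/-- The sites of the soliton that the scan of `η` completes on reading `z` (`∅` if there is
none). -/
noncomputable def completedSites (η : Cfg) (z : ℤ) : Finset ℤ :=
  (pushAt η z).completed.elim ∅ Soliton.sites

namespace DescendingLift

variable {η : Cfg} {ξ : ℤ → ℤ} (h : DescendingLift η ξ) {k : ℕ} {x y : ℤ}
include h

lemma seat_stackAt_of_not_isRecord (k : ℕ) (hrec : ¬ isRecord η x) :
    (stackAt η x).seat k = if k ≤ level η x then η x else (stackAt η (x - 1)).seat k := by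
  rw [h.stackAt_of_not_isRecord hrec]
  exact Stack.seat_step (h.reduced_stackAt _) (h.ballBottom_stackAt _)
    (h.eq_true_of_stackAt_eq_nil hrec) k

lemma seat_stackAt_of_slot (hx : Slot η k x) : (stackAt η x).seat k = η x := by
  by_cases hrec : isRecord η x
  · rw [stackAt_of_isRecord hrec, h.eq_false_of_isRecord hrec]
    rfl
  · rw [h.seat_stackAt_of_not_isRecord k hrec, if_pos (hx.resolve_left hrec)]

lemma seat_stackAt_of_not_slot (hx : ¬ Slot η k x) :
    (stackAt η x).seat k = (stackAt η (x - 1)).seat k := by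
  obtain ⟨hrec, hlevel⟩ := not_or.1 hx
  rw [h.seat_stackAt_of_not_isRecord k hrec, if_neg hlevel]

lemma seat_stackAt_of_forall (hx : Slot η k x) (hxy : x ≤ y)
    (hno : ∀ w, x < w → w ≤ y → ¬ Slot η k w) : (stackAt η y).seat k = η x := by
  induction y, hxy using Int.leInduction with
  | base => exact h.seat_stackAt_of_slot hx
  | succ y hxy ih =>
    rw [h.seat_stackAt_of_not_slot (hno _ (by omega) le_rfl), add_sub_cancel_right]
    exact ih fun w h1 h2 => hno w h1 (by omega)

lemma seat_stackAt_sub_one_eq_iff (hy : Slot η k y) :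
    (stackAt η (y - 1)).seat k = η y ↔ Slot η (k + 1) y := by
  by_cases hrec : isRecord η y
  · simp [h.stackAt_sub_one_of_isRecord hrec, Stack.seat, h.eq_false_of_isRecord hrec, Slot, hrec]
  rcases (hy.resolve_left hrec).lt_or_eq with hlt | rfl
  · exact iff_of_true (Stack.seat_of_lt_level hlt) (.inr hlt)
  · have hseat : (stackAt η (y - 1)).seat (level η y) = !η y :=
      Stack.seat_level (h.reduced_stackAt _) (h.ballBottom_stackAt _)
        (h.eq_true_of_stackAt_eq_nil hrec)
    simp [hseat, Slot, hrec]

lemma eq_iff_slot_succ (hx : Slot η k x) (hxy : x < y)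
    (hno : ∀ w, x < w → w < y → ¬ Slot η k w) (hy : Slot η k y) :
    η y = η x ↔ Slot η (k + 1) y := by
  rw [← h.seat_stackAt_sub_one_eq_iff hy, eq_comm, h.seat_stackAt_of_forall hx
    (Int.le_sub_one_of_lt hxy) fun w h1 h2 => hno w h1 (Int.lt_of_le_sub_one h2)]

lemma isSome_completed_iff (hx : Slot η (k + 1) x) {z : ℤ} (hxz : x < z)
    (hno : ∀ w, x < w → w ≤ z → ¬ Slot η (k + 1) w) (hz : level η z = k) :
    (pushAt η z).completed.isSome ↔ η z = η x := by
  have hrec : ¬ isRecord η z := fun hrec => hno z hxz le_rfl (.inl hrec)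
  have hseat : (pushAt η z).completed.isSome ↔ (stackAt η (z - 1)).seat (level η z + 1) = η z :=
    Stack.isSome_completed_push_iff (h.reduced_stackAt _) (h.ballBottom_stackAt _)
      (h.eq_true_of_stackAt_eq_nil hrec)
  rw [hseat, hz, h.seat_stackAt_of_forall hx (Int.le_sub_one_of_lt hxz)
    fun w h1 h2 => hno w h1 (by omega), eq_comm]

lemma completedSites_injOn : {z | (pushAt η z).completed.isSome}.InjOn (completedSites η) := by
  intro z hz z' hz' heq
  obtain ⟨s, hs⟩ := Option.isSome_iff_exists.1 hz
  obtain ⟨s', hs'⟩ := Option.isSome_iff_exists.1 hz'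
  rw [completedSites, completedSites, hs, hs'] at heq
  change s.sites = s'.sites at heq
  have hc := h.isCompletedAt hs
  have hc' := h.isCompletedAt hs'
  exact le_antisymm (hc'.le (heq ▸ hc.mem_sites_self)) (hc.le (heq ▸ hc'.mem_sites_self))

lemma ncard_Gamma_between (hx : Slot η (k + 1) x) (hno : ∀ w, x < w → w < y → ¬ Slot η (k + 1) w) :
    {γ | γ ∈ Gamma η (k + 1) ∧ ∀ u ∈ γ, x < u ∧ u < y}.ncard =
      {z | x < z ∧ z < y ∧ level η z = k ∧ η z = η x}.ncard := by
  have hsome {z : ℤ} (hz : x < z ∧ z < y ∧ level η z = k ∧ η z = η x) :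
      (pushAt η z).completed.isSome :=
    (h.isSome_completed_iff hx hz.1 (fun w h1 h2 => hno w h1 (h2.trans_lt hz.2.1)) hz.2.2.1).2
      hz.2.2.2
  have hinj : {z | x < z ∧ z < y ∧ level η z = k ∧ η z = η x}.InjOn (completedSites η) :=
    h.completedSites_injOn.mono fun _ => hsome
  rw [← hinj.ncard_image]
  congr 1
  ext γ
  constructor
  · rintro ⟨hγ, hsub⟩
    obtain ⟨z, s, hs, hk, rfl⟩ := h.mem_Gamma_iff.1 hγ
    obtain ⟨hxz, hzy⟩ := hsub z (h.isCompletedAt hs).mem_sites_self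
    have hletter := (h.isSome_completed_iff hx hxz (fun w h1 h2 => hno w h1 (h2.trans_lt hzy))
      (Nat.succ.inj hk)).1 (by simp [hs])
    exact ⟨z, ⟨hxz, hzy, Nat.succ.inj hk, hletter⟩, by simp [completedSites, hs]⟩
  · rintro ⟨z, hz, rfl⟩
    obtain ⟨s, hs⟩ := Option.isSome_iff_exists.1 (hsome hz)
    obtain ⟨hxz, hzy, hk, -⟩ := hz
    have hsites : completedSites η z = s.sites := by simp [completedSites, hs]
    rw [hsites]
    refine ⟨h.mem_Gamma_iff.2 ⟨z, s, hs, by rw [hk], rfl⟩, fun u hu => ?_⟩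
    have hc := h.isCompletedAt hs
    exact ⟨not_le.1 fun hux => hc.not_slot hu hux hxz.le (hk ▸ hx), (hc.le hu).trans_lt hzy⟩

end DescendingLift

/-! ### Enumerations -/

lemma exists_strictMono_range_eq {S : Set ℤ} (hgt : ∀ x, ∃ y > x, y ∈ S) (hlt : ∀ x, ∃ y < x, y ∈ S)
    {b : ℤ} (hb : b ∈ S) : ∃ f : ℤ → ℤ, StrictMono f ∧ f 0 = b ∧ Set.range f = S := by
  classical
  have : Nonempty S := ⟨⟨b, hb⟩⟩
  have : NoMaxOrder S := ⟨fun x => (hgt x).elim fun y hy => ⟨⟨y, hy.2⟩, hy.1⟩⟩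
  have : NoMinOrder S := ⟨fun x => (hlt x).elim fun y hy => ⟨⟨y, hy.2⟩, hy.1⟩⟩
  let : SuccOrder S := LinearLocallyFiniteOrder.succOrder S
  let : PredOrder S := LinearLocallyFiniteOrder.predOrder S
  let e : S ≃o ℤ := orderIsoIntOfLinearSuccPredArch
  refine ⟨fun i => e.symm (i + e ⟨b, hb⟩), fun i j hij => ?_, by simp, ?_⟩
  · exact e.symm.strictMono (add_lt_add_left hij _)
  · ext x
    refine ⟨?_, fun hx => ⟨e ⟨x, hx⟩ - e ⟨b, hb⟩, by simp⟩⟩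
    rintro ⟨i, rfl⟩
    exact Subtype.coe_prop _

lemma sub_le_sub_of_strictMono {a : ℤ → ℤ} (ha : StrictMono a) {i j : ℤ} (hij : i ≤ j) :
    j - i ≤ a j - a i := by
  induction j, hij using Int.leInduction with
  | base => simp
  | succ j _ ih =>
    have := ha (lt_add_one j)
    omega

lemma exists_strictMono_comp_eq {e f : ℤ → ℤ} (he : StrictMono e) (hf : StrictMono f)
    (h0 : e 0 = f 0) (hsub : Set.range f ⊆ Set.range e) :
    ∃ a : ℤ → ℤ, StrictMono a ∧ a 0 = 0 ∧ ∀ i, e (a i) = f i := by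
  choose a ha using fun i => hsub ⟨i, rfl⟩
  exact ⟨a, fun i j hij => he.lt_iff_lt.1 (by simpa [ha] using hf hij),
    he.injective ((ha 0).trans h0.symm), ha⟩

lemma notMem_range_of_strictMono {e : ℤ → ℤ} (he : StrictMono e) {i w : ℤ} (h1 : e i < w)
    (h2 : w < e (i + 1)) : w ∉ Set.range e := by
  rintro ⟨j, rfl⟩
  have := he.lt_iff_lt.1 h1
  have := he.lt_iff_lt.1 h2
  omega

lemma eq_add_of_strictMono_of_surjective {e : ℤ → ℤ} (he : StrictMono e)
    (hsurj : Function.Surjective e) (i : ℤ) : e i = e 0 + i := by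
  have hsucc (i : ℤ) : e (i + 1) = e i + 1 := by
    refine le_antisymm (not_lt.1 fun hlt => ?_) (he (lt_add_one i))
    exact notMem_range_of_strictMono he (lt_add_one (e i)) hlt (hsurj _)
  induction i using Int.induction_on with
  | zero => simp
  | succ i ih => rw [hsucc, ih, add_assoc]
  | pred i ih =>
    have := hsucc (-i - 1)
    rw [sub_add_cancel, ih] at this
    omega

namespace DescendingLift

variable {η : Cfg} {ξ : ℤ → ℤ} (h : DescendingLift η ξ)
include h

lemma skEnum_spec (k : ℕ) : StrictMono (skEnum η ξ k) ∧ skEnum η ξ k 0 = recPos ξ 0 ∧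
    Set.range (skEnum η ξ k) = {x | Slot η k x} := by
  have hset : {x | IsKSlot η k x} = {x | Slot η k x} := Set.ext fun _ => h.isKSlot_iff
  have hex : ∃ f : ℤ → ℤ, StrictMono f ∧ f 0 = recPos ξ 0 ∧ Set.range f = {x | Slot η k x} :=
    exists_strictMono_range_eq
      (fun x => (h.exists_isRecord_gt x).imp fun _ hy => ⟨hy.1, .inl hy.2⟩)
      (fun x => (h.exists_isRecord_le (x - 1)).imp fun _ hy =>
        ⟨Int.lt_of_le_sub_one hy.1, .inl hy.2⟩)
      (.inl (h.isRecord_recPos_and_apply 0).1)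
  rw [skEnum, hset, enumZ, dif_pos hex]
  exact hex.choose_spec

lemma strictMono_skEnum (k : ℕ) : StrictMono (skEnum η ξ k) := (h.skEnum_spec k).1

lemma skEnum_apply_zero (k : ℕ) : skEnum η ξ k 0 = recPos ξ 0 := (h.skEnum_spec k).2.1

lemma slot_iff_mem_range {k : ℕ} {x : ℤ} : Slot η k x ↔ x ∈ Set.range (skEnum η ξ k) := by
  rw [(h.skEnum_spec k).2.2]
  rfl

lemma slot_skEnum (k : ℕ) (i : ℤ) : Slot η k (skEnum η ξ k i) :=
  h.slot_iff_mem_range.2 ⟨i, rfl⟩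

lemma skEnum_zero (i : ℤ) : skEnum η ξ 0 i = recPos ξ 0 + i := by
  rw [← h.skEnum_apply_zero 0]
  exact eq_add_of_strictMono_of_surjective (h.strictMono_skEnum 0)
    (fun x => h.slot_iff_mem_range.1 (.inr (Nat.zero_le _))) i

lemma strictMono_recPos : StrictMono (recPos ξ) := by
  intro i j hij
  obtain ⟨hi, hξi⟩ := h.isRecord_recPos_and_apply i
  obtain ⟨-, hξj⟩ := h.isRecord_recPos_and_apply j
  refine not_le.1 fun hle => ?_
  rcases hle.eq_or_lt with heq | hlt
  · rw [heq] at hξj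
    omega
  · have := (h.isRecord_iff _).1 hi _ hlt
    omega

end DescendingLift

/-! ### Reconstruction -/

/-- The letters of `η` at its successive `k`-slots, in the enumeration `skEnum`. -/
noncomputable def slotLetter (η : Cfg) (ξ : ℤ → ℤ) (k : ℕ) (i : ℤ) : Bool := η (skEnum η ξ k i)

/-- The number of `k`-slots strictly between the `i`-th and the next `(k + 1)`-slot, as a function
of the letters `W` of the `(k + 1)`-slots and of the component `M = M_{k + 1}`. -/
def gap (M : ℤ → ℕ) (W : ℤ → Bool) (i : ℤ) : ℕ := 2 * M i + if W (i + 1) = W i then 0 else 1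

/-- How the letters `W₁` of the `(k + 1)`-slots and the component `M` determine the letters `W₀`
of the `k`-slots: `a i` is the index as a `k`-slot of the `i`-th `(k + 1)`-slot. -/
structure Refines (M : ℤ → ℕ) (W₁ W₀ : ℤ → Bool) (a : ℤ → ℤ) : Prop where
  zero : a 0 = 0
  succ : ∀ i, a (i + 1) = a i + gap M W₁ i + 1
  letter : ∀ i, ∀ t ≤ gap M W₁ i, W₀ (a i + t) = W₁ i ↔ Even t

lemma eq_of_eq_iff_eq {b b' c : Bool} (h : b = c ↔ b' = c) : b = b' := by
  revert h
  cases b <;> cases b' <;> cases c <;> decide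

namespace Refines

variable {M : ℤ → ℕ} {W₁ W₀ W₁' W₀' : ℤ → Bool} {a a' : ℤ → ℤ} (h : Refines M W₁ W₀ a)
include h

lemma strictMono : StrictMono a := strictMono_int_of_lt_succ fun i => by
  have := h.succ i
  omega

lemma exists_eq_add {n : ℕ} {j : ℤ} (hj : j ∈ Set.Icc (-n : ℤ) n) :
    ∃ i ∈ Set.Icc (-n : ℤ) n, ∃ t ≤ gap M W₁ i, j = a i + t ∧ (i = n → t = 0) := by
  have hleft := sub_le_sub_of_strictMono h.strictMono (show (-n : ℤ) ≤ 0 by omega)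
  have hright := sub_le_sub_of_strictMono h.strictMono (show (0 : ℤ) ≤ n by omega)
  rw [h.zero] at hleft hright
  obtain ⟨hj1, hj2⟩ := hj
  have hle {i : ℤ} (hi : a i ≤ j) : i ≤ n := h.strictMono.le_iff_le.1 (by omega)
  have hlow : a (-n) ≤ j := by omega
  obtain ⟨i, hi, hmax⟩ := Int.exists_greatest_of_bdd (P := fun i => a i ≤ j)
    ⟨n, fun _ => hle⟩ ⟨-n, hlow⟩
  have hlt : j < a (i + 1) := not_le.1 fun hle => (hmax _ hle).not_gt (lt_add_one i)
  rw [h.succ] at hlt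
  refine ⟨i, ⟨hmax _ hlow, hle hi⟩, (j - a i).toNat, by omega, by omega, ?_⟩
  rintro rfl
  omega

lemma index_eqOn (h' : Refines M W₁' W₀' a') {n : ℕ}
    (hgap : ∀ i ∈ Set.Ico (-n : ℤ) n, gap M W₁ i = gap M W₁' i) :
    Set.EqOn a a' (Set.Icc (-n) n) := by
  intro i
  induction i using Int.induction_on with
  | zero => exact fun _ => h.zero.trans h'.zero.symm
  | succ i ih =>
    rintro ⟨h1, h2⟩
    rw [h.succ, h'.succ, ih ⟨by omega, by omega⟩, hgap i ⟨by omega, by omega⟩]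
  | pred i ih =>
    rintro ⟨h1, h2⟩
    have hi := ih ⟨by omega, by omega⟩
    have hs := h.succ (-i - 1)
    have hs' := h'.succ (-i - 1)
    rw [sub_add_cancel] at hs hs'
    have := hgap (-i - 1) ⟨h1, by omega⟩
    omega

lemma eqOn (h' : Refines M W₁' W₀' a') {n : ℕ} (hW : Set.EqOn W₁ W₁' (Set.Icc (-n) n)) :
    Set.EqOn W₀ W₀' (Set.Icc (-n) n) := by
  have hgap : ∀ i ∈ Set.Ico (-n : ℤ) n, gap M W₁ i = gap M W₁' i := fun i hi => by
    rw [gap, gap, hW (Set.Ico_subset_Icc_self hi),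
      hW ⟨hi.1.trans (lt_add_one i).le, Int.add_one_le_iff.2 hi.2⟩]
  intro j hj
  obtain ⟨i, hi, t, ht, rfl, htop⟩ := h.exists_eq_add hj
  have ht' : t ≤ gap M W₁' i := by
    rcases hi.2.eq_or_lt with heq | hlt
    · exact (htop heq).trans_le (Nat.zero_le _)
    · rwa [← hgap i ⟨hi.1, hlt⟩]
  have hletter := h.letter i t ht
  have hletter' := h'.letter i t ht'
  rw [← h.index_eqOn h' hgap hi, ← hW hi, ← hletter] at hletter'
  exact eq_of_eq_iff_eq hletter'.symm

end Refines

namespace DescendingLift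

variable {η : Cfg} {ξ : ℤ → ℤ} (h : DescendingLift η ξ) {k c : ℕ} {p : ℤ}
include h

lemma slotLetter_add_one_eq_iff (k : ℕ) (p : ℤ) :
    slotLetter η ξ k (p + 1) = slotLetter η ξ k p ↔ Slot η (k + 1) (skEnum η ξ k (p + 1)) :=
  h.eq_iff_slot_succ (h.slot_skEnum k p) (h.strictMono_skEnum k (lt_add_one p))
    (fun _ h1 h2 hw => notMem_range_of_strictMono (h.strictMono_skEnum k) h1 h2
      (h.slot_iff_mem_range.1 hw)) (h.slot_skEnum k (p + 1))

lemma slotLetter_add_eq_iff_even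
    (hno : ∀ w, skEnum η ξ k p < w → w < skEnum η ξ k (p + c + 1) → ¬ Slot η (k + 1) w)
    {t : ℕ} (ht : t ≤ c) : slotLetter η ξ k (p + t) = slotLetter η ξ k p ↔ Even t := by
  induction t with
  | zero => simp
  | succ t ih =>
    have hslot : ¬ Slot η (k + 1) (skEnum η ξ k (p + t + 1)) :=
      hno _ (h.strictMono_skEnum k (by omega)) (h.strictMono_skEnum k (by omega))
    have hne := (h.slotLetter_add_one_eq_iff k (p + t)).not.2 hslot
    rw [Nat.even_add_one, ← ih (by omega), Nat.cast_succ, ← add_assoc, Bool.eq_not.2 hne]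
    exact Bool.not_eq_iff

lemma setOf_level_eq_image
    (hno : ∀ w, skEnum η ξ k p < w → w < skEnum η ξ k (p + c + 1) → ¬ Slot η (k + 1) w) :
    {z | skEnum η ξ k p < z ∧ z < skEnum η ξ k (p + c + 1) ∧ level η z = k ∧
      η z = η (skEnum η ξ k p)} =
      (fun t : ℕ => skEnum η ξ k (p + (2 * (t + 1) : ℕ))) '' Set.Iio (c / 2) := by
  have hlt {i j : ℤ} : skEnum η ξ k i < skEnum η ξ k j ↔ i < j :=
    (h.strictMono_skEnum k).lt_iff_lt
  ext z
  constructor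
  · rintro ⟨hpz, hzp, hlevel, hletter⟩
    obtain ⟨j, rfl⟩ := h.slot_iff_mem_range.1 (.inr hlevel.ge : Slot η k z)
    rw [hlt] at hpz hzp
    obtain ⟨t, rfl⟩ : ∃ t : ℕ, j = p + t := ⟨(j - p).toNat, by omega⟩
    obtain ⟨u, rfl⟩ := even_iff_two_dvd.1 <|
      (h.slotLetter_add_eq_iff_even hno (by omega)).1 hletter
    exact ⟨u - 1, Set.mem_Iio.2 (by omega), by
      simp only [Nat.sub_add_cancel (show 1 ≤ u by omega)]⟩
  · rintro ⟨t, ht, rfl⟩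
    have ht : 2 * (t + 1) ≤ c := by
      have := Set.mem_Iio.1 ht
      omega
    have h1 : skEnum η ξ k p < skEnum η ξ k (p + (2 * (t + 1) : ℕ)) := hlt.2 (by omega)
    have h2 : skEnum η ξ k (p + (2 * (t + 1) : ℕ)) < skEnum η ξ k (p + c + 1) := hlt.2 (by omega)
    obtain ⟨hrec, hlevel⟩ := not_or.1 (hno _ h1 h2)
    refine ⟨h1, h2, ?_, (h.slotLetter_add_eq_iff_even hno ht).2 (even_two_mul _)⟩
    exact le_antisymm (Nat.lt_succ_iff.1 (not_le.1 hlevel))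
      ((h.slot_skEnum k _).resolve_left hrec)

lemma ncard_Gamma_between_skEnum (hp : Slot η (k + 1) (skEnum η ξ k p))
    (hno : ∀ w, skEnum η ξ k p < w → w < skEnum η ξ k (p + c + 1) → ¬ Slot η (k + 1) w) :
    {γ | γ ∈ Gamma η (k + 1) ∧
      ∀ u ∈ γ, skEnum η ξ k p < u ∧ u < skEnum η ξ k (p + c + 1)}.ncard = c / 2 := by
  have hinj : Function.Injective fun t : ℕ => skEnum η ξ k (p + (2 * (t + 1) : ℕ)) :=
    fun t u htu => by
      have := (h.strictMono_skEnum k).injective htu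
      omega
  rw [h.ncard_Gamma_between hp hno, h.setOf_level_eq_image hno,
    Set.ncard_image_of_injective _ hinj]
  simp

lemma gap_eq_and_slotLetter_iff_even {i : ℤ} (hp : skEnum η ξ k p = skEnum η ξ (k + 1) i)
    (hq : skEnum η ξ k (p + c + 1) = skEnum η ξ (k + 1) (i + 1)) :
    gap (Mk η ξ (k + 1)) (slotLetter η ξ (k + 1)) i = c ∧
      ∀ t ≤ c, slotLetter η ξ k (p + t) = slotLetter η ξ (k + 1) i ↔ Even t := by
  have hno (w : ℤ) (h1 : skEnum η ξ k p < w) (h2 : w < skEnum η ξ k (p + c + 1)) :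
      ¬ Slot η (k + 1) w := fun hw =>
    notMem_range_of_strictMono (h.strictMono_skEnum (k + 1)) (hp ▸ h1) (hq ▸ h2)
      (h.slot_iff_mem_range.1 hw)
  have hletter : slotLetter η ξ (k + 1) i = slotLetter η ξ k p := congrArg η hp.symm
  have heven {t : ℕ} (ht : t ≤ c) := h.slotLetter_add_eq_iff_even hno ht
  have hnext : slotLetter η ξ (k + 1) (i + 1) = slotLetter η ξ k (p + c) :=
    (congrArg η hq.symm).trans <|
      (h.slotLetter_add_one_eq_iff k (p + c)).2 (hq ▸ h.slot_skEnum (k + 1) (i + 1))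
  have hM : Mk η ξ (k + 1) i = c / 2 := by
    rw [← h.ncard_Gamma_between_skEnum (hp ▸ h.slot_skEnum (k + 1) i) hno, hp, hq, Mk]
  rw [gap, hM, hnext, hletter, if_congr (heven le_rfl) rfl rfl]
  refine ⟨?_, fun t ht => heven ht⟩
  split_ifs with hc
  · exact Nat.two_mul_div_two_of_even hc
  · exact Nat.two_mul_div_two_add_one_of_odd (Nat.not_even_iff_odd.1 hc)

lemma exists_refines (k : ℕ) :
    ∃ a, Refines (Mk η ξ (k + 1)) (slotLetter η ξ (k + 1)) (slotLetter η ξ k) a := by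
  obtain ⟨a, ha, ha0, hcomp⟩ := exists_strictMono_comp_eq (h.strictMono_skEnum k)
    (h.strictMono_skEnum (k + 1)) (by rw [h.skEnum_apply_zero, h.skEnum_apply_zero])
    (fun x hx => h.slot_iff_mem_range.1 (h.slot_iff_mem_range.2 hx).of_succ)
  have key (i : ℤ) : ∃ c : ℕ, a (i + 1) = a i + c + 1 ∧
      gap (Mk η ξ (k + 1)) (slotLetter η ξ (k + 1)) i = c ∧
      ∀ t ≤ c, slotLetter η ξ k (a i + t) = slotLetter η ξ (k + 1) i ↔ Even t := by
    have hlt := ha (lt_add_one i)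
    obtain ⟨c, hc⟩ : ∃ c : ℕ, a (i + 1) = a i + c + 1 := ⟨(a (i + 1) - a i - 1).toNat, by omega⟩
    exact ⟨c, hc, h.gap_eq_and_slotLetter_iff_even (hcomp i) (hc ▸ hcomp (i + 1))⟩
  choose c hsucc hgap hletter using key
  refine ⟨a, ha0, fun i => ?_, fun i => ?_⟩ <;> rw [hgap i]
  exacts [hsucc i, hletter i]

lemma eventually_slotLetter_eq_false (n : ℕ) :
    ∀ᶠ k in atTop, ∀ i ∈ Set.Icc (-n : ℤ) n, slotLetter η ξ k i = false := by
  obtain ⟨K, hK⟩ := ((Set.finite_Icc (recPos ξ (-n)) (recPos ξ n)).image (level η)).bddAbove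
  filter_upwards [eventually_gt_atTop K] with k hk i hi
  obtain ⟨b, hb, hb0, hcomp⟩ := exists_strictMono_comp_eq (h.strictMono_skEnum k)
    h.strictMono_recPos (h.skEnum_apply_zero k) (by
      rintro _ ⟨j, rfl⟩
      exact h.slot_iff_mem_range.1 (.inl (h.isRecord_recPos_and_apply j).1))
  have hleft := sub_le_sub_of_strictMono hb (show (-n : ℤ) ≤ 0 by omega)
  have hright := sub_le_sub_of_strictMono hb (show (0 : ℤ) ≤ n by omega)
  obtain ⟨hi1, hi2⟩ := hi
  have hmem : skEnum η ξ k i ∈ Set.Icc (recPos ξ (-n)) (recPos ξ n) := by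
    rw [← hcomp, ← hcomp]
    exact ⟨(h.strictMono_skEnum k).monotone (by omega), (h.strictMono_skEnum k).monotone (by omega)⟩
  have hlevel : level η (skEnum η ξ k i) ≤ K := hK (Set.mem_image_of_mem _ hmem)
  exact h.eq_false_of_isRecord ((h.slot_skEnum k i).resolve_right (hlevel.trans_lt hk).not_ge)

theorem slotLetter_eq_of_forall_Mk_eq {η' : Cfg} {ξ' : ℤ → ℤ} (h' : DescendingLift η' ξ')
    (hM : ∀ k ≥ 1, Mk η ξ k = Mk η' ξ' k) : slotLetter η ξ = slotLetter η' ξ' := by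
  funext k i
  have hi : i ∈ Set.Icc (-(i.natAbs : ℤ)) i.natAbs := Set.mem_Icc.2 (by omega)
  refine (?_ : Set.EqOn (slotLetter η ξ k) (slotLetter η' ξ' k) _) hi
  obtain ⟨m, hkm, hm, hm'⟩ := ((eventually_ge_atTop k).and
    ((h.eventually_slotLetter_eq_false i.natAbs).and
      (h'.eventually_slotLetter_eq_false i.natAbs))).exists
  clear hi
  induction hkm using Nat.decreasingInduction with
  | self => exact fun j hj => (hm j hj).trans (hm' j hj).symm
  | of_succ k _ ih =>
    obtain ⟨a, ha⟩ := h.exists_refines k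
    obtain ⟨a', ha'⟩ := h'.exists_refines k
    rw [← hM (k + 1) (Nat.le_add_left 1 k)] at ha'
    exact ha.eqOn ha' ih

end DescendingLift

end BoxBall

theorem component_reconstruction_general {η η' : Cfg} {ξ ξ' : ℤ → ℤ}
    (h : BoxBall.DescendingLift η ξ) (h' : BoxBall.DescendingLift η' ξ')
    (hM : ∀ k : ℕ, 1 ≤ k → ∀ i : ℤ, Mk η ξ k i = Mk η' ξ' k i) (i : ℤ) :
    ξ (recPos ξ 0 + i) = ξ' (recPos ξ' 0 + i) := by
  have hletter (i : ℤ) : η (recPos ξ 0 + i) = η' (recPos ξ' 0 + i) := by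
    rw [← h.skEnum_zero, ← h'.skEnum_zero]
    exact congrFun₂ (h.slotLetter_eq_of_forall_Mk_eq h' fun k hk => funext (hM k hk)) 0 i
  have hstep (i : ℤ) : ξ (recPos ξ 0 + (i + 1)) - ξ (recPos ξ 0 + i) =
      ξ' (recPos ξ' 0 + (i + 1)) - ξ' (recPos ξ' 0 + i) := by
    have hlift := h.isLift (recPos ξ 0 + (i + 1))
    have hlift' := h'.isLift (recPos ξ' 0 + (i + 1))
    rw [← add_assoc, add_sub_cancel_right, add_assoc] at hlift hlift'
    rw [hlift, hlift', hletter]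
  induction i using Int.induction_on with
  | zero =>
    simpa using (h.isRecord_recPos_and_apply 0).2.trans (h'.isRecord_recPos_and_apply 0).2.symm
  | succ i ih => linarith [hstep i]
  | pred i ih =>
    have := hstep (-i - 1)
    rw [sub_add_cancel] at this
    linarith

/-- **reconstruction.** Let `𝒲̂` be the set of walk lifts `ξ` of
configurations `η ∈ 𝒳` (with finite running minimum) normalized so that
`min{x : ξ(x) = 0} = 0` (Record `0` at the origin).  If two such walks have the
same `k`-component for every `k ≥ 1`, then they are equal: the slot
decomposition `ξ ↦ (M_k ξ)_{k≥1}` is injective on `𝒲̂`, and a configuration can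
be reconstructed from its components. -/
theorem component_reconstruction (η η' : Cfg) (ξ ξ' : ℤ → ℤ)
    (hη : inX η) (hη' : inX η') (hlift : IsLift η ξ) (hlift' : IsLift η' ξ')
    (hbdd : ∀ x : ℤ, BddBelow (ξ '' Set.Iic x))
    (hbdd' : ∀ x : ℤ, BddBelow (ξ' '' Set.Iic x))
    (h0 : ξ 0 = 0 ∧ ∀ x < 0, ξ x ≠ 0) (h0' : ξ' 0 = 0 ∧ ∀ x < 0, ξ' x ≠ 0)
    (hM : ∀ k : ℕ, 1 ≤ k → ∀ i : ℤ, Mk η ξ k i = Mk η' ξ' k i) :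
    ξ = ξ' := by
  funext x
  simpa [BoxBall.recPos_zero_of_forall_lt h0, BoxBall.recPos_zero_of_forall_lt h0'] using
    component_reconstruction_general (.of_inX hη hlift) (.of_inX hη' hlift') hM x
end

section
/- Let μ̂ be a probability measure on X̂ that is invariant under the record-shift θ̂ and satisfies μ̂(r) < ∞. Then the inverse-Palm measure μ := Palm(μ̂) is θ-invariant, supported on X, and satisfies Palm(μ̂) ∘ T^{-1} = Palm(μ̂ ∘ T̂^{-1}). -/
open MeasureTheory Filter Finset

/-- The shift `θ` on configurations: `θη(y) = η(y+1)`. -/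
def shiftC (η : Cfg) : Cfg := fun y => η (y + 1)

/-- The shift by `n`: `θ^n η (y) = η (y + n)`. -/
def shiftBy (n : ℤ) (η : Cfg) : Cfg := fun y => η (y + n)

/-- The shift on `ℕ^ℤ` (soliton components). -/
def shiftN (z : ℤ → ℕ) : ℤ → ℕ := fun i => z (i + 1)

/-- `r(η)`: the position of the first record of `η` in `[1,∞)`. -/
noncomputable def rFirst (η : Cfg) : ℤ := sInf {x : ℤ | 1 ≤ x ∧ isRecord η x}

/-- The record-shift `θ̂ η = θ^{r(η)} η`. -/
noncomputable def thetaHat (η : Cfg) : Cfg := shiftBy (rFirst η) η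

/-- The dynamics seen from a record, `T̂ η = θ^{ψ_η(0)} (Tη)` where `ψ_η(0)` is
the position of Record `0` of `Tξ` for the canonical lift `ξ = ξ°[η]`. -/
noncomputable def That (η : Cfg) : Cfg := shiftBy (recPos (liftT (xi0 η)) 0) (bbsT η)

/-- The set `𝒳` of configurations with density in `(0,1/2)`. -/
def Xset : Set Cfg := {η | inX η}

/-- The set `𝒳̂` of configurations in `𝒳` having a record at the origin. -/
def XhatSet : Set Cfg := {η | inX η ∧ isRecord η 0}

/-- The `k`-component of a configuration (seen from its canonical lift `ξ°[η]`,
which for `η ∈ 𝒳̂` has Record `0` at the origin). -/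
noncomputable def MkHat (η : Cfg) (k : ℕ) (i : ℤ) : ℕ := Mk η (xi0 η) k i

/-- `μ` is the inverse-Palm measure of `μ̂`:
`μ(A) = μ̂(r)⁻¹ · ∫ Σ_{i=1}^{r(η)} 1_A(θ^i η) dμ̂`. -/
def PalmIdentity (muhat mu : MeasureTheory.Measure Cfg) : Prop :=
  ∀ A : Set Cfg, MeasurableSet A →
    mu A = (∫⁻ η, ((rFirst η).toNat : ENNReal) ∂muhat)⁻¹ *
      ∫⁻ η, ∑ i ∈ Finset.Icc (1 : ℤ) (rFirst η),
        A.indicator (fun _ => (1 : ENNReal)) (shiftBy i η) ∂muhat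

/-- The number of `k`-solitons in the excursion of `η` between Records 0 and 1
(i.e. contained in `(0, r(η))`), for `η` with a record at the origin. -/
noncomputable def excCount (η : Cfg) (k : ℕ) : ℕ :=
  Set.ncard {γ | γ ∈ Gamma η k ∧ ∀ x ∈ γ, 0 < x ∧ x < rFirst η}

/-- `ρ_k`: the mean number of `k`-solitons per excursion, under
`μ̂ = μ( · | 0 ∈ Rη)`. -/
noncomputable def rhoK (mu : MeasureTheory.Measure Cfg) (k : ℕ) : ℝ :=
  ∫ η, (excCount η k : ℝ) ∂(ProbabilityTheory.cond mu XhatSet)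

/-- `w_0 = 1 + Σ_k 2k ρ_k`: the mean excursion length. -/
noncomputable def w0of (mu : MeasureTheory.Measure Cfg) : ℝ :=
  1 + ∑' k : ℕ, 2 * (k : ℝ) * rhoK mu k

/-- `ρ̄_k = ρ_k / w_0`: the mean number of `k`-solitons per site. -/
noncomputable def rhoBar (mu : MeasureTheory.Measure Cfg) (k : ℕ) : ℝ :=
  rhoK mu k / w0of mu

/-- The leftmost site of a soliton. -/
noncomputable def leftmost (γ : Finset ℤ) : ℤ := sInf (γ : Set ℤ)


/-!
The mean number of visits to `A` in a cycle `(0, r(η)]` is, up to normalisation, `μ(A)`. Let `g`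
be a map of configurations commuting with shifts, and `a(η) ≤ 0` a site such that the cycle of
`g η` starting at `a(η)` ends at `a(θ̂η) + r(η)`. The numbers of visits of `g η` to `A` in
`(0, r(η)]` and in `(a(η), a(θ̂η) + r(η)]` differ by the coboundary `h ∘ θ̂ - h`, where `h(η)`
counts the visits in `(a(η), 0]`. Coboundaries have integral zero under a finite invariant
measure: `h` may fail to be integrable, but its truncations are bounded, and Fatou's lemma gives
both inequalities. For `g = θ` and `a = -1` this is the `θ`-invariance of `μ`; for `g = T` and
`a = ψ` it is the commutation of `T` with the inverse-Palm map.

That `a = ψ` is admissible is seen on walks. Lifts of configurations of density `λ` have slope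
`2λ - 1 < 0`, and `T` reflects a walk at its running minimum. The reflected walk lies below the
original one, so its Record `0` sits at `ψ ≤ 0`, and it still goes from `+∞` to `-∞`. Record `1`
of `ξ` becomes Record `0` when the origin is moved there, so Record `1` of `Tξ` sits at
`ψ(θ̂η) + r(η)`.
-/

section

open ProbabilityTheory
open scoped ENNReal Topology

/-! ### Integrals along an invariant return map -/

section MeasurePreserving

variable {Ω : Type*} [MeasurableSpace Ω] {μ : Measure Ω}

lemma measurable_apply_of_countable {ι β : Type*} [Countable ι] [MeasurableSpace ι]
    [MeasurableSingletonClass ι] [MeasurableSpace β] {g : ι → Ω → β} (hg : ∀ i, Measurable (g i))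
    {n : Ω → ι} (hn : Measurable n) : Measurable fun ω => g (n ω) ω :=
  (measurable_from_prod_countable_right hg : Measurable fun p : ι × Ω => g p.1 p.2).comp
    (hn.prodMk measurable_id)

/- Truncating `H` and `K` at level `n` makes their integrals cancel, and Fatou's lemma
removes the truncation. -/
lemma lintegral_le_of_add_eq_add [IsFiniteMeasure μ] {F G H K : Ω → ℝ≥0∞}
    (hF : AEMeasurable F μ) (hHK : IdentDistrib H K μ μ) (hH : ∀ᵐ ω ∂μ, H ω ≠ ∞)
    (h : ∀ᵐ ω ∂μ, F ω + H ω = G ω + K ω) : ∫⁻ ω, G ω ∂μ ≤ ∫⁻ ω, F ω ∂μ := by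
  have hK : ∀ᵐ ω ∂μ, K ω ≠ ∞ := hHK.ae_snd (measurableSet_singleton ∞).compl hH
  have hHn (n : ℕ) : AEMeasurable (fun ω => min (H ω) n) μ :=
    hHK.aemeasurable_fst.min aemeasurable_const
  have hKn (n : ℕ) : AEMeasurable (fun ω => min (K ω) n) μ :=
    hHK.aemeasurable_snd.min aemeasurable_const
  have hKn_top (n : ℕ) : ∫⁻ ω, min (K ω) n ∂μ ≠ ∞ :=
    ((lintegral_mono fun ω => min_le_right (K ω) n).trans_lt
      (lintegral_const_lt_top (ENNReal.natCast_ne_top n))).ne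
  have integral_trunc (n : ℕ) : ∫⁻ ω, (F ω + min (H ω) n - min (K ω) n) ∂μ = ∫⁻ ω, F ω ∂μ := by
    have heq : ∫⁻ ω, min (H ω) n ∂μ = ∫⁻ ω, min (K ω) n ∂μ :=
      (hHK.comp (measurable_id.min measurable_const)).lintegral_eq
    have hle : ∀ᵐ ω ∂μ, min (K ω) n ≤ F ω + min (H ω) n := by
      filter_upwards [h] with ω hω
      rw [← min_add_add_left, hω]
      exact min_le_min le_add_self le_add_self
    rw [lintegral_sub' (hKn n) (hKn_top n) hle, lintegral_add_left' hF, heq,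
      ENNReal.add_sub_cancel_right (hKn_top n)]
  have tendsto_trunc : ∀ᵐ ω ∂μ,
      Tendsto (fun n : ℕ => F ω + min (H ω) n - min (K ω) n) atTop (𝓝 (G ω)) := by
    filter_upwards [h, hH, hK] with ω hω hHω hKω
    obtain ⟨N, hN⟩ := ENNReal.exists_nat_gt (max_lt hHω.lt_top hKω.lt_top).ne
    refine tendsto_const_nhds.congr' ?_
    filter_upwards [eventually_ge_atTop N] with n hn
    have hmax : max (H ω) (K ω) ≤ n := hN.le.trans (Nat.cast_le.2 hn)
    rw [min_eq_left (le_of_max_le_left hmax), min_eq_left (le_of_max_le_right hmax), hω,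
      ENNReal.add_sub_cancel_right hKω]
  calc ∫⁻ ω, G ω ∂μ
      = ∫⁻ ω, liminf (fun n : ℕ => F ω + min (H ω) n - min (K ω) n) atTop ∂μ :=
        lintegral_congr_ae (tendsto_trunc.mono fun ω hω => hω.liminf_eq.symm)
    _ ≤ liminf (fun n : ℕ => ∫⁻ ω, (F ω + min (H ω) n - min (K ω) n) ∂μ) atTop :=
        lintegral_liminf_le' fun n => (hF.add (hHn n)).sub (hKn n)
    _ = ∫⁻ ω, F ω ∂μ := by simp only [integral_trunc, liminf_const]

lemma lintegral_eq_of_add_eq_add [IsFiniteMeasure μ] {F G H K : Ω → ℝ≥0∞}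
    (hF : AEMeasurable F μ) (hG : AEMeasurable G μ) (hHK : IdentDistrib H K μ μ)
    (hH : ∀ᵐ ω ∂μ, H ω ≠ ∞) (h : ∀ᵐ ω ∂μ, F ω + H ω = G ω + K ω) :
    ∫⁻ ω, F ω ∂μ = ∫⁻ ω, G ω ∂μ :=
  le_antisymm
    (lintegral_le_of_add_eq_add hG hHK.symm
      (hHK.ae_snd (measurableSet_singleton ∞).compl hH) (h.mono fun _ hω => hω.symm))
    (lintegral_le_of_add_eq_add hF hHK hH h)

lemma sum_Ioc_add_sum_Ioc {α M : Type*} [LinearOrder α] [LocallyFiniteOrder α] [AddCommMonoid M]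
    (f : α → M) {a b c : α} (hab : a ≤ b) (hbc : b ≤ c) :
    ∑ i ∈ Ioc a b, f i + ∑ i ∈ Ioc b c, f i = ∑ i ∈ Ioc a c, f i := by
  rw [← sum_union (Ioc_disjoint_Ioc_of_le le_rfl), Ioc_union_Ioc_eq_Ioc hab hbc]

lemma sum_Ioc_comp_add_right {M : Type*} [AddCommMonoid M] (f : ℤ → M) (a b c : ℤ) :
    ∑ i ∈ Ioc a b, f (i + c) = ∑ i ∈ Ioc (a + c) (b + c), f i := by
  rw [← map_add_right_Ioc, sum_map]
  rfl

lemma measurable_sum_Ioc {M : Type*} [AddCommMonoid M] [MeasurableSpace M] [MeasurableAdd₂ M]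
    {f : Ω → ℤ → M} {b c : Ω → ℤ} (hb : Measurable b) (hc : Measurable c)
    (hf : ∀ i, Measurable (f · i)) : Measurable fun ω => ∑ i ∈ Ioc (b ω) (c ω), f ω i := by
  have hsum (s : Finset ℤ) : Measurable fun ω => ∑ i ∈ s, f ω i :=
    Finset.measurable_fun_sum s fun i _ => hf i
  exact measurable_apply_of_countable
    (fun i => measurable_apply_of_countable (fun j => hsum (Ioc i j)) hc) hb

lemma lintegral_sum_Ioc_return [IsFiniteMeasure μ] {S : Ω → Ω} (hS : MeasurePreserving S μ μ)
    {f : Ω → ℤ → ℝ≥0∞} (hf : ∀ i, Measurable (f · i)) (hf_top : ∀ ω i, f ω i ≠ ∞)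
    {r a : Ω → ℤ} (hr : Measurable r) (ha : Measurable a)
    (hfS : ∀ ω i, f (S ω) i = f ω (i + r ω)) (hr₀ : ∀ᵐ ω ∂μ, 0 ≤ r ω) (ha₀ : ∀ᵐ ω ∂μ, a ω ≤ 0)
    (har : ∀ᵐ ω ∂μ, a ω ≤ a (S ω) + r ω) :
    ∫⁻ ω, ∑ i ∈ Ioc 0 (r ω), f ω i ∂μ = ∫⁻ ω, ∑ i ∈ Ioc (a ω) (a (S ω) + r ω), f ω i ∂μ := by
  let H : Ω → ℝ≥0∞ := fun ω => ∑ i ∈ Ioc (a ω) 0, f ω i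
  have hH : Measurable H := measurable_sum_Ioc ha measurable_const hf
  have hHS : IdentDistrib H (H ∘ S) μ μ := by
    refine ⟨hH.aemeasurable, (hH.comp hS.measurable).aemeasurable, ?_⟩
    rw [← Measure.map_map hH hS.measurable, hS.map_eq]
  have hHS_apply (ω : Ω) : H (S ω) = ∑ i ∈ Ioc (a (S ω) + r ω) (r ω), f ω i := by
    simp only [H, hfS, sum_Ioc_comp_add_right, zero_add]
  refine lintegral_eq_of_add_eq_add (measurable_sum_Ioc measurable_const hr hf).aemeasurable
    (measurable_sum_Ioc ha ((ha.comp hS.measurable).add hr) hf).aemeasurable hHS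
    (.of_forall fun ω => ENNReal.sum_ne_top.2 fun i _ => hf_top ω i) ?_
  filter_upwards [hr₀, ha₀, har, hS.quasiMeasurePreserving.ae ha₀] with ω hr₀ ha₀ har haS
  calc ∑ i ∈ Ioc 0 (r ω), f ω i + H ω
      = ∑ i ∈ Ioc (a ω) (r ω), f ω i := by rw [add_comm, sum_Ioc_add_sum_Ioc _ ha₀ hr₀]
    _ = ∑ i ∈ Ioc (a ω) (a (S ω) + r ω), f ω i + H (S ω) := by
        rw [hHS_apply, sum_Ioc_add_sum_Ioc _ har (by omega)]

end MeasurePreserving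

/-! ### Walks -/

lemma abs_two_mul_valZ_sub_one (b : Bool) : |2 * valZ b - 1| = 1 := by cases b <;> rfl

lemma valZ_not (b : Bool) : valZ (!b) = 1 - valZ b := by cases b <;> rfl

lemma valR_eq_cast_valZ (b : Bool) : valR b = valZ b := by cases b <;> simp [valR, valZ]

lemma xi0_zero (η : Cfg) : xi0 η 0 = 0 := by simp [xi0]

lemma isLift_xi0 (η : Cfg) : IsLift η (xi0 η) := by
  have sum_split {a b : ℤ} (hab : a < b) : ∑ y ∈ Ioc a b, (2 * valZ (η y) - 1) =
      2 * valZ (η b) - 1 + ∑ y ∈ Ioc a (b - 1), (2 * valZ (η y) - 1) := by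
    rw [← insert_Ioc_sub_one_right_eq_Ioc hab, sum_insert (by simp)]
  have sum_split_left {b : ℤ} (hb : b ≤ 0) : ∑ y ∈ Ioc (b - 1) 0, (2 * valZ (η y) - 1) =
      2 * valZ (η b) - 1 + ∑ y ∈ Ioc b 0, (2 * valZ (η y) - 1) := by
    rw [← insert_Ioc_left_eq_Ioc_sub_one hb, sum_insert (by simp)]
  have xi0_eq (x : ℤ) : xi0 η x =
      ∑ y ∈ Ioc 0 x, (2 * valZ (η y) - 1) - ∑ y ∈ Ioc x 0, (2 * valZ (η y) - 1) := by
    rcases le_or_gt 0 x with hx | hx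
    · simp [xi0, hx, ← Icc_add_one_left_eq_Ioc]
    · simp [xi0, hx.not_ge, hx.le, ← Icc_add_one_left_eq_Ioc]
  intro x
  rcases lt_or_ge 0 x with hx | hx
  · rw [xi0_eq, xi0_eq, sum_split hx, Ioc_eq_empty_of_le hx.le,
      Ioc_eq_empty_of_le (a := x - 1) (by omega)]
    ring
  · rw [xi0_eq, xi0_eq, sum_split_left hx, Ioc_eq_empty_of_le hx,
      Ioc_eq_empty_of_le (b := x - 1) (by omega)]
    ring

namespace IsLift

variable {η : Cfg} {ξ : ℤ → ℤ}

lemma sum_Icc (h : IsLift η ξ) {a b : ℤ} (hab : a - 1 ≤ b) :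
    ∑ y ∈ Icc a b, (2 * valZ (η y) - 1) = ξ b - ξ (a - 1) := by
  induction b, hab using Int.leInduction with
  | base => simp
  | succ b hb ih =>
    have := h (b + 1)
    rw [← insert_Icc_right_eq_Icc_add_one (by omega), sum_insert (by simp), ih]
    grind

lemma abs_sub_le (h : IsLift η ξ) (a b : ℤ) : |ξ a - ξ b| ≤ |a - b| := by
  wlog hba : b ≤ a generalizing a b
  · simpa only [abs_sub_comm] using this b a (by omega)
  calc |ξ a - ξ b| = |∑ y ∈ Icc (b + 1) a, (2 * valZ (η y) - 1)| := by
        rw [h.sum_Icc (by omega), add_sub_cancel_right]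
    _ ≤ ∑ y ∈ Icc (b + 1) a, |2 * valZ (η y) - 1| := abs_sum_le_sum_abs ..
    _ = |a - b| := by simp [abs_two_mul_valZ_sub_one, abs_of_nonneg, hba]

lemma comp_add (h : IsLift η ξ) (n c : ℤ) : IsLift (shiftBy n η) fun x => ξ (x + n) + c := by
  intro x
  simp only [shiftBy, ← h (x + n), sub_add_eq_add_sub, add_sub_add_right_eq_sub]

lemma eq_of_apply_zero {ξ' : ℤ → ℤ} (h : IsLift η ξ) (h' : IsLift η ξ') (h₀ : ξ 0 = ξ' 0) :
    ξ = ξ' := by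
  funext x
  induction x using Int.induction_on with
  | zero => exact h₀
  | succ n ih => grind [h (n + 1), h' (n + 1)]
  | pred n ih => grind [h (-n), h' (-n)]

lemma isRecord_iff (h : IsLift η ξ) {x : ℤ} : isRecord η x ↔ ∀ z < x, ξ x < ξ z := by
  have sum_lt_iff (z : ℤ) (hz : z ≤ x) :
      ∑ y ∈ Icc z x, valZ (η y) < ∑ y ∈ Icc z x, (1 - valZ (η y)) ↔ ξ x < ξ (z - 1) := by
    rw [← sub_neg, ← sum_sub_distrib, ← sub_neg (a := ξ x), ← h.sum_Icc (by omega)]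
    simp only [two_mul, sub_sub_eq_add_sub]
  refine ⟨fun H z hz => ?_, fun H z hz => (sum_lt_iff z hz).2 (H _ (by omega))⟩
  simpa using (sum_lt_iff (z + 1) hz).1 (H (z + 1) hz)

end IsLift

lemma shiftBy_shiftBy (m n : ℤ) (η : Cfg) : shiftBy m (shiftBy n η) = shiftBy (m + n) η := by
  funext x
  simp only [shiftBy, add_assoc]

lemma shiftBy_zero (η : Cfg) : shiftBy 0 η = η := by
  funext x
  simp only [shiftBy, add_zero]

lemma xi0_shiftBy (n : ℤ) (η : Cfg) :
    xi0 (shiftBy n η) = fun x => xi0 η (x + n) + -xi0 η n :=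
  (isLift_xi0 _).eq_of_apply_zero ((isLift_xi0 η).comp_add n _) (by simp [xi0_zero])

lemma isRecord_shiftBy {n : ℤ} {η : Cfg} {x : ℤ} :
    isRecord (shiftBy n η) x ↔ isRecord η (x + n) := by
  rw [((isLift_xi0 η).comp_add n 0).isRecord_iff, (isLift_xi0 η).isRecord_iff,
    (Equiv.addRight n).forall_congr_left]
  simp

lemma bbsT_shiftBy (n : ℤ) (η : Cfg) : bbsT (shiftBy n η) = shiftBy n (bbsT η) := by
  funext x
  by_cases hx : isRecord η (x + n) <;> simp [bbsT, isRecord_shiftBy, shiftBy, hx]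

/-! ### Density and slope -/

lemma tendsto_cofinite_iff_of_abs_sub_le_div {f g : ℤ → ℝ} {C c : ℝ}
    (h : ∀ x ≠ 0, |f x - g x| ≤ C / |(x : ℝ)|) :
    Tendsto f cofinite (𝓝 c) ↔ Tendsto g cofinite (𝓝 c) := by
  have hx : Tendsto (fun x : ℤ => |(x : ℝ)|) cofinite atTop :=
    tendsto_norm_cocompact_atTop.comp Int.tendsto_coe_cofinite
  refine tendsto_iff_of_dist (squeeze_zero' (.of_forall fun _ => dist_nonneg) ?_
    (hx.const_div_atTop C))
  filter_upwards [(Set.finite_singleton (0 : ℤ)).compl_mem_cofinite] with x hx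
  exact h x hx

lemma tendsto_int_cofinite_iff {β : Type*} {f : ℤ → β} {l : Filter β} :
    Tendsto f cofinite l ↔
      Tendsto (fun n : ℕ => f (-n)) atTop l ∧ Tendsto (fun n : ℕ => f n) atTop l := by
  rw [Int.cofinite_eq, tendsto_sup, ← map_neg_atTop, tendsto_map'_iff, ← Nat.map_cast_int_atTop,
    tendsto_map'_iff, tendsto_map'_iff]
  rfl

lemma inXlam_iff_tendsto_cofinite {lam : ℝ} {η : Cfg} : inXlam lam η ↔ Tendsto
    (fun x : ℤ => (∑ y ∈ Icc (min 0 x) (max 0 x), valR (η y)) / |(x : ℝ)|) cofinite (𝓝 lam) := by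
  rw [tendsto_int_cofinite_iff]
  simp [inXlam]

namespace IsLift

variable {η : Cfg} {ξ : ℤ → ℤ}

lemma two_mul_sum_valR (h : IsLift η ξ) {a b : ℤ} (hab : a - 1 ≤ b) :
    2 * ∑ y ∈ Icc a b, valR (η y) = ξ b - ξ (a - 1) + (b + 1 - a) := by
  have := h.sum_Icc hab
  rw [sum_sub_distrib, ← mul_sum, sum_const, Int.card_Icc, nsmul_one,
    Int.toNat_of_nonneg (by omega), sub_eq_iff_eq_add] at this
  simpa [valR_eq_cast_valZ] using congrArg (Int.cast : ℤ → ℝ) this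

lemma inXlam_iff (h : IsLift η ξ) {lam : ℝ} :
    inXlam lam η ↔ Tendsto (fun x : ℤ => (ξ x : ℝ) / x) cofinite (𝓝 (2 * lam - 1)) := by
  have affine_iff {f : ℤ → ℝ} : Tendsto f cofinite (𝓝 lam) ↔
      Tendsto (fun x => 2 * f x - 1) cofinite (𝓝 (2 * lam - 1)) := by
    simpa only [Function.comp_def, affineHomeomorph_apply, ← sub_eq_add_neg] using
      (affineHomeomorph (2 : ℝ) (-1) two_ne_zero).isInducing.tendsto_nhds_iff
  rw [inXlam_iff_tendsto_cofinite, affine_iff]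
  refine tendsto_cofinite_iff_of_abs_sub_le_div (C := |(ξ 0 : ℝ)| + 2) fun x hx => ?_
  have abs_step_le (y : ℤ) : |(ξ y : ℝ) - ξ (y - 1)| ≤ 1 := by
    exact_mod_cast (h.abs_sub_le y (y - 1)).trans_eq (by simp)
  rw [le_div_iff₀ (by positivity), ← abs_mul]
  rcases hx.lt_or_gt with hx | hx
  · have hx' : (x : ℝ) < 0 := by exact_mod_cast hx
    have hsum := h.two_mul_sum_valR (a := x) (b := 0) (by omega)
    rw [min_eq_right hx.le, max_eq_left hx.le, abs_of_neg hx', mul_div_assoc', hsum]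
    rw [show _ * _ = -((ξ x - ξ (x - 1)) + ξ 0 + 1 : ℝ) by push_cast; field_simp; ring]
    grind [abs_step_le x]
  · have hx' : (0 : ℝ) < x := by exact_mod_cast hx
    have hsum := h.two_mul_sum_valR (a := 0) (b := x) (by omega)
    rw [min_eq_left hx.le, max_eq_right hx.le, abs_of_pos hx', mul_div_assoc', hsum]
    rw [show _ * _ = ((ξ 0 - ξ (0 - 1)) - ξ 0 + 1 : ℝ) by push_cast; field_simp; ring]
    grind [abs_step_le 0]

end IsLift

lemma inX_iff {η : Cfg} {ξ : ℤ → ℤ} (h : IsLift η ξ) : inX η ↔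
    ∃ c ∈ Set.Ioo (-1 : ℝ) 0, Tendsto (fun x : ℤ => (ξ x : ℝ) / x) cofinite (𝓝 c) := by
  constructor
  · rintro ⟨lam, h₀, h₁, hlam⟩
    exact ⟨2 * lam - 1, ⟨by linarith, by linarith⟩, h.inXlam_iff.1 hlam⟩
  · rintro ⟨c, ⟨h₁, h₀⟩, hc⟩
    exact ⟨(c + 1) / 2, by linarith, by linarith, h.inXlam_iff.2 (by convert hc; ring)⟩

lemma inX_shiftBy {η : Cfg} (hη : inX η) (n : ℤ) : inX (shiftBy n η) := by
  obtain ⟨c, hc, hlim⟩ := (inX_iff (isLift_xi0 η)).1 hη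
  refine (inX_iff ((isLift_xi0 η).comp_add n 0)).2 ⟨c, hc, ?_⟩
  refine (tendsto_cofinite_iff_of_abs_sub_le_div (C := |(n : ℝ)|) fun x _ => ?_).2 hlim
  have lip : |(xi0 η (x + n) : ℝ) - xi0 η x| ≤ |(n : ℝ)| := by
    simpa using Int.cast_le (R := ℝ).2 ((isLift_xi0 η).abs_sub_le (x + n) x)
  rw [add_zero, ← sub_div, abs_div]
  gcongr

/-- The walk `ξ` goes down from `+∞` to `-∞`, as the lifts of configurations in `𝒳` do. On such
walks the infima defining `runMin` and `recPos` are attained. -/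
structure IsDownward (ξ : ℤ → ℤ) : Prop where
  tendsto_atBot : Tendsto ξ atBot atTop
  tendsto_atTop : Tendsto ξ atTop atBot

lemma isLeast_runMin {ξ : ℤ → ℤ} (hξ : Tendsto ξ atBot atTop) (x : ℤ) :
    IsLeast (ξ '' Set.Iic x) (runMin ξ x) := by
  obtain ⟨i, hi⟩ := eventually_atBot.1 (hξ.eventually_ge_atTop (ξ x))
  obtain ⟨m, hm, hmin⟩ := (Icc (min i x) x).exists_min_image ξ ⟨x, by simp⟩
  have hleast : IsLeast (ξ '' Set.Iic x) (ξ m) := by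
    refine ⟨⟨m, (mem_Icc.1 hm).2, rfl⟩, ?_⟩
    rintro _ ⟨y, hy, rfl⟩
    rcases le_total y (min i x) with hyi | hyi
    · exact (hmin x (by simp)).trans (hi y (hyi.trans (min_le_left _ _)))
    · exact hmin y (mem_Icc.2 ⟨hyi, hy⟩)
  rwa [runMin, hleast.csInf_eq]

lemma liftT_le {ξ : ℤ → ℤ} (hξ : Tendsto ξ atBot atTop) (x : ℤ) : liftT ξ x ≤ ξ x := by
  have : runMin ξ x ≤ ξ x := (isLeast_runMin hξ x).2 ⟨x, Set.self_mem_Iic, rfl⟩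
  rw [liftT]
  omega

section Slope

variable {ξ : ℤ → ℤ} {c : ℝ}

lemma isDownward_of_tendsto_div (hc : c < 0)
    (h : Tendsto (fun x : ℤ => (ξ x : ℝ) / x) cofinite (𝓝 c)) : IsDownward ξ := by
  have hdiv (l : Filter ℤ) (hl : ∀ᶠ x in l, x ≠ 0) :
      (fun x : ℤ => (ξ x : ℝ) / x * x) =ᶠ[l] fun x => (ξ x : ℝ) := by
    filter_upwards [hl] with x hx
    exact div_mul_cancel₀ _ (Int.cast_ne_zero.2 hx)
  rw [Int.cofinite_eq, tendsto_sup] at h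
  exact
    { tendsto_atBot := tendsto_intCast_atTop_iff.1 <| (h.1.neg_mul_atBot hc
        (tendsto_intCast_atBot_iff.2 tendsto_id)).congr' (hdiv _ (eventually_ne_atBot 0))
      tendsto_atTop := tendsto_intCast_atBot_iff.1 <| (h.2.neg_mul_atTop hc
        tendsto_intCast_atTop_atTop).congr' (hdiv _ (eventually_ne_atTop 0)) }

/- Near `-∞` the walk stays between the lines of slopes `5c/4` and `3c/4`, so that
`2 * runMin ξ x - ξ x ≥ (2 * (3c/4) - 5c/4) * x = (c/4) * x`. -/
lemma isDownward_liftT_of_tendsto_div (hc : c < 0)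
    (h : Tendsto (fun x : ℤ => (ξ x : ℝ) / x) cofinite (𝓝 c)) : IsDownward (liftT ξ) := by
  have hξ := isDownward_of_tendsto_div hc h
  refine ⟨?_, tendsto_atBot_mono (liftT_le hξ.tendsto_atBot) hξ.tendsto_atTop⟩
  have between : ∀ᶠ x : ℤ in atBot, 3 * c / 4 * x ≤ ξ x ∧ ξ x ≤ 5 * c / 4 * x := by
    have hlim : Tendsto (fun x : ℤ => (ξ x : ℝ) / x) atBot (𝓝 c) :=
      h.mono_left (Int.cofinite_eq ▸ le_sup_left)
    filter_upwards [hlim.eventually (Ioo_mem_nhds (by linarith : 5 * c / 4 < c)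
      (by linarith : c < 3 * c / 4)), eventually_lt_atBot 0] with x hx hx₀
    have hx₀ : (x : ℝ) < 0 := Int.cast_lt_zero.2 hx₀
    exact ⟨((div_lt_iff_of_neg hx₀).1 hx.2).le, ((lt_div_iff_of_neg hx₀).1 hx.1).le⟩
  obtain ⟨i, hi⟩ := eventually_atBot.1 between
  have line_le : ∀ᶠ x : ℤ in atBot, c / 4 * (x : ℝ) ≤ liftT ξ x := by
    filter_upwards [eventually_le_atBot i] with x hx
    obtain ⟨y, hy, hmin⟩ := (isLeast_runMin hξ.tendsto_atBot x).1
    have hyx : (y : ℝ) ≤ x := Int.cast_le.2 hy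
    have h₁ := (hi y (le_trans hy hx)).1
    have h₂ := (hi x hx).2
    rw [liftT, ← hmin]
    push_cast
    nlinarith
  exact tendsto_intCast_atTop_iff.1 <| tendsto_atTop_mono' _ line_le <|
    (tendsto_intCast_atBot_iff.2 tendsto_id).const_mul_atBot_of_neg (by linarith)

end Slope

/-! ### Records and the reflected walk -/

lemma runMin_eq_min {ξ : ℤ → ℤ} (hξ : Tendsto ξ atBot atTop) (x : ℤ) :
    runMin ξ x = min (ξ x) (runMin ξ (x - 1)) := by
  have hIic : ξ '' Set.Iic x = insert (ξ x) (ξ '' Set.Iic (x - 1)) := by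
    rw [← Set.image_insert_eq, Set.Iic_sub_one_eq_Iio, Set.Iio_insert]
  rw [runMin, hIic, ((isLeast_runMin hξ (x - 1)).insert (ξ x)).csInf_eq]

lemma runMin_comp_add {ξ : ℤ → ℤ} (hξ : Tendsto ξ atBot atTop) (n c x : ℤ) :
    runMin (fun y => ξ (y + n) + c) x = runMin ξ (x + n) + c := by
  obtain ⟨⟨y, hy, hmin⟩, hle⟩ := isLeast_runMin hξ (x + n)
  refine IsLeast.csInf_eq ⟨⟨y - n, by grind, by grind⟩, ?_⟩
  rintro _ ⟨z, hz, rfl⟩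
  exact add_le_add_left (hle ⟨z + n, by grind, rfl⟩) c

lemma liftT_comp_add {ξ : ℤ → ℤ} (hξ : Tendsto ξ atBot atTop) (n c : ℤ) :
    liftT (fun x => ξ (x + n) + c) = fun x => liftT ξ (x + n) + c := by
  funext x
  simp only [liftT, runMin_comp_add hξ]
  ring

namespace IsLift

variable {η : Cfg} {ξ : ℤ → ℤ}

lemma isRecord_iff_lt_runMin (h : IsLift η ξ) (hξ : Tendsto ξ atBot atTop) {x : ℤ} :
    isRecord η x ↔ ξ x < runMin ξ (x - 1) := by
  rw [h.isRecord_iff]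
  obtain ⟨⟨y, hy, hmin⟩, hle⟩ := isLeast_runMin hξ (x - 1)
  constructor
  · intro H
    exact hmin ▸ H y (by grind)
  · intro H z hz
    exact H.trans_le (hle ⟨z, by grind, rfl⟩)

protected lemma liftT (h : IsLift η ξ) (hξ : Tendsto ξ atBot atTop) :
    IsLift (bbsT η) (liftT ξ) := by
  intro x
  have step := h x
  have hle : runMin ξ (x - 1) ≤ ξ (x - 1) := (isLeast_runMin hξ _).2 ⟨_, Set.self_mem_Iic, rfl⟩
  have lip := abs_le.1 (h.abs_sub_le (x - 1) x)
  rw [liftT, liftT, runMin_eq_min hξ x, bbsT]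
  by_cases hx : isRecord η x
  · have := (h.isRecord_iff_lt_runMin hξ).1 hx
    rw [if_pos hx, min_eq_left this.le]
    simp [valZ]
    grind
  · have := not_lt.1 (mt (h.isRecord_iff_lt_runMin hξ).2 hx)
    rw [if_neg hx, min_eq_right this, valZ_not]
    omega

lemma apply_eq_of_isLeast (h : IsLift η ξ) {k p : ℤ} (hp : IsLeast {x | ξ x ≤ k} p) :
    ξ p = k := by
  have before : k < ξ (p - 1) := by
    by_contra! hle
    have := hp.2 hle
    omega
  have lip := abs_le.1 (h.abs_sub_le (p - 1) p)
  grind [hp.1]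

lemma isLeast_recPos (h : IsLift η ξ) (hξ : IsDownward ξ) (j : ℤ) :
    IsLeast {x | ξ x ≤ -j} (recPos ξ j) := by
  obtain ⟨i, hi⟩ := eventually_atBot.1 (hξ.tendsto_atBot.eventually_gt_atTop (-j))
  have bddBelow : BddBelow {x | ξ x ≤ -j} := ⟨i, fun x hx => by grind⟩
  have nonempty : {x | ξ x ≤ -j}.Nonempty :=
    (hξ.tendsto_atTop.eventually_le_atBot (-j)).exists
  obtain ⟨p, hp⟩ : ∃ p, IsLeast {x | ξ x ≤ -j} p :=
    ⟨_, Int.csInf_mem nonempty bddBelow, fun x hx => csInf_le bddBelow hx⟩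
  have : recPos ξ j = p :=
    IsLeast.csInf_eq ⟨h.apply_eq_of_isLeast hp, fun x (hx : ξ x = -j) => hp.2 hx.le⟩
  rwa [this]

lemma apply_recPos (h : IsLift η ξ) (hξ : IsDownward ξ) (j : ℤ) : ξ (recPos ξ j) = -j :=
  h.apply_eq_of_isLeast (h.isLeast_recPos hξ j)

lemma recPos_le (h : IsLift η ξ) (hξ : IsDownward ξ) {j x : ℤ} (hx : ξ x ≤ -j) :
    recPos ξ j ≤ x :=
  (h.isLeast_recPos hξ j).2 hx

lemma strictMono_recPos (h : IsLift η ξ) (hξ : IsDownward ξ) : StrictMono (recPos ξ) := by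
  intro i j hij
  have hj := h.apply_recPos hξ j
  refine lt_of_le_of_ne (h.recPos_le hξ (by omega)) fun heq => ?_
  have := h.apply_recPos hξ i
  rw [heq] at this
  omega

lemma recPos_comp_add (h : IsLift η ξ) (hξ : IsDownward ξ) (n c j : ℤ) :
    recPos (fun x => ξ (x + n) + c) j = recPos ξ (j + c) - n := by
  have := h.apply_recPos hξ (j + c)
  refine IsLeast.csInf_eq ⟨by grind, fun x hx => ?_⟩
  have := h.recPos_le hξ (j := j + c) (x := x + n) (by grind)
  omega

lemma recPos_of_isRecord (h : IsLift η ξ) {x : ℤ} (hx : isRecord η x) :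
    recPos ξ (-ξ x) = x := by
  refine IsLeast.csInf_eq ⟨(neg_neg _).symm, fun z hz => ?_⟩
  by_contra! hzx
  have := h.isRecord_iff.1 hx z hzx
  grind

lemma isRecord_recPos (h : IsLift η ξ) (hξ : IsDownward ξ) (j : ℤ) :
    isRecord η (recPos ξ j) := by
  rw [h.isRecord_iff]
  intro z hz
  by_contra! hle
  exact hz.not_ge (h.recPos_le hξ (hle.trans_eq (h.apply_recPos hξ j)))

lemma rFirst_shiftBy_recPos (h : IsLift η ξ) (hξ : IsDownward ξ) (j : ℤ) :
    rFirst (shiftBy (recPos ξ j) η) = recPos ξ (j + 1) - recPos ξ j := by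
  have lt := h.strictMono_recPos hξ (lt_add_one j)
  refine IsLeast.csInf_eq ⟨⟨by omega, ?_⟩, ?_⟩
  · rw [isRecord_shiftBy, sub_add_cancel]
    exact h.isRecord_recPos hξ _
  · rintro x ⟨hx, hrec⟩
    rw [isRecord_shiftBy, h.isRecord_iff] at hrec
    have := hrec (recPos ξ j) (by omega)
    have := h.recPos_le hξ (j := j + 1) (x := x + recPos ξ j) (by grind [h.apply_recPos hξ j])
    omega

end IsLift

/-- The position `ψ_η(0)` of Record `0` of `T ξ`, where `ξ` is the canonical lift of `η`. -/
noncomputable def psi (η : Cfg) : ℤ := recPos (liftT (xi0 η)) 0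

lemma rFirst_nonneg (η : Cfg) : 0 ≤ rFirst η := by
  rcases Set.eq_empty_or_nonempty {x : ℤ | 1 ≤ x ∧ isRecord η x} with hempty | hne
  · rw [rFirst, hempty, Int.csInf_empty]
  · exact le_csInf hne fun x hx => zero_le_one.trans hx.1

lemma isDownward_xi0 {η : Cfg} (hη : inX η) : IsDownward (xi0 η) := by
  obtain ⟨c, hc, hlim⟩ := (inX_iff (isLift_xi0 η)).1 hη
  exact isDownward_of_tendsto_div hc.2 hlim

lemma isDownward_liftT_xi0 {η : Cfg} (hη : inX η) : IsDownward (liftT (xi0 η)) := by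
  obtain ⟨c, hc, hlim⟩ := (inX_iff (isLift_xi0 η)).1 hη
  exact isDownward_liftT_of_tendsto_div hc.2 hlim

lemma isLift_liftT_xi0 {η : Cfg} (hη : inX η) : IsLift (bbsT η) (liftT (xi0 η)) :=
  (isLift_xi0 η).liftT (isDownward_xi0 hη).tendsto_atBot

lemma recPos_xi0_zero {η : Cfg} (hη : isRecord η 0) : recPos (xi0 η) 0 = 0 := by
  simpa [xi0_zero] using (isLift_xi0 η).recPos_of_isRecord hη

lemma rFirst_eq_recPos {η : Cfg} (hη : η ∈ XhatSet) : rFirst η = recPos (xi0 η) 1 := by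
  simpa [recPos_xi0_zero hη.2, shiftBy_zero] using
    (isLift_xi0 η).rFirst_shiftBy_recPos (isDownward_xi0 hη.1) 0

lemma rFirst_pos {η : Cfg} (hη : η ∈ XhatSet) : 0 < rFirst η := by
  rw [rFirst_eq_recPos hη, ← recPos_xi0_zero hη.2]
  exact (isLift_xi0 η).strictMono_recPos (isDownward_xi0 hη.1) zero_lt_one

lemma psi_nonpos {η : Cfg} (hη : inX η) : psi η ≤ 0 := by
  refine (isLift_liftT_xi0 hη).recPos_le (isDownward_liftT_xi0 hη) ?_
  simpa [xi0_zero] using liftT_le (isDownward_xi0 hη).tendsto_atBot 0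

lemma psi_thetaHat {η : Cfg} (hη : η ∈ XhatSet) :
    psi (thetaHat η) = recPos (liftT (xi0 η)) 1 - rFirst η := by
  have hξ := isDownward_xi0 hη.1
  have apply_rFirst : xi0 η (rFirst η) = -1 := by
    rw [rFirst_eq_recPos hη, (isLift_xi0 η).apply_recPos hξ]
  rw [psi, thetaHat, xi0_shiftBy, liftT_comp_add hξ.tendsto_atBot,
    (isLift_liftT_xi0 hη.1).recPos_comp_add (isDownward_liftT_xi0 hη.1), apply_rFirst]
  norm_num

lemma rFirst_That {η : Cfg} (hη : η ∈ XhatSet) :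
    rFirst (That η) = rFirst η + psi (thetaHat η) - psi η := by
  have : rFirst (That η) = recPos (liftT (xi0 η)) 1 - psi η :=
    (isLift_liftT_xi0 hη.1).rFirst_shiftBy_recPos (isDownward_liftT_xi0 hη.1) 0
  rw [this, psi_thetaHat hη]
  ring

/-! ### Measurability -/

lemma sInf_int_eq_iff {s : Set ℤ} {n : ℤ} :
    sInf s = n ↔ IsLeast s n ∨ n = 0 ∧ ∀ m, ¬IsLeast s m := by
  by_cases h : ∃ m, IsLeast s m
  · obtain ⟨m, hm⟩ := h
    rw [hm.csInf_eq]
    exact ⟨fun hmn => .inl (hmn ▸ hm),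
      fun H => H.elim hm.unique fun H => absurd hm (H.2 m)⟩
  · have hzero : sInf s = 0 := by
      rcases s.eq_empty_or_nonempty with rfl | hne
      · exact Int.csInf_empty
      · exact Int.csInf_of_not_bddBelow fun hbdd =>
          h ⟨_, Int.csInf_mem hne hbdd, fun _ hx => csInf_le hbdd hx⟩
    simp [not_exists.1 h, hzero, eq_comm]

lemma measurable_sInf_int {Ω : Type*} [MeasurableSpace Ω] {s : Ω → Set ℤ}
    (hs : ∀ n, Measurable fun ω => n ∈ s ω) : Measurable fun ω => sInf (s ω) := by
  have hleast (n : ℤ) : Measurable fun ω => IsLeast (s ω) n := by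
    simp only [IsLeast, mem_lowerBounds]
    exact (hs n).and (.forall fun m => (hs m).imp measurable_const)
  refine measurable_to_countable' fun n => ?_
  simp only [Set.preimage, Set.mem_singleton_iff, sInf_int_eq_iff]
  exact measurableSet_setOfPred.2
    ((hleast n).or (measurable_const.and (.forall fun m => (hleast m).not)))

lemma measurableSet_exists_mem_tendsto {Ω ι E : Type*} [MeasurableSpace Ω] [Countable ι]
    [TopologicalSpace E] [PolishSpace E] [MeasurableSpace E] [BorelSpace E] [Nonempty E]
    {l : Filter ι} [l.IsCountablyGenerated] [l.NeBot] {f : ι → Ω → E}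
    (hf : ∀ i, Measurable (f i)) {s : Set E} (hs : MeasurableSet s) :
    MeasurableSet {ω | ∃ c ∈ s, Tendsto (f · ω) l (𝓝 c)} := by
  have hlim : Measurable fun ω => limUnder l (f · ω) :=
    (StronglyMeasurable.limUnder fun i => (hf i).stronglyMeasurable).measurable
  convert (measurableSet_exists_tendsto hf (l := l)).inter (hlim hs) using 1
  ext ω
  constructor
  · rintro ⟨c, hc, hω⟩
    exact ⟨⟨c, hω⟩, by simpa only [Set.mem_preimage, hω.limUnder_eq] using hc⟩
  · rintro ⟨⟨c, hω⟩, hc⟩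
    exact ⟨c, by simpa only [Set.mem_preimage, hω.limUnder_eq] using hc, hω⟩

lemma measurable_valZ_apply (x : ℤ) : Measurable fun η : Cfg => valZ (η x) :=
  (measurable_of_countable valZ).comp (measurable_pi_apply x)

lemma measurable_isRecord (x : ℤ) : Measurable fun η => isRecord η x :=
  .forall fun _ => .forall fun _ => measurableSet_setOfPred.1 <| measurableSet_lt
    (Finset.measurable_fun_sum _ fun y _ => measurable_valZ_apply y)
    (Finset.measurable_fun_sum _ fun y _ => (measurable_valZ_apply y).const_sub 1)

lemma measurable_rFirst : Measurable rFirst :=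
  measurable_sInf_int fun x => measurable_const.and (measurable_isRecord x)

lemma measurable_shiftBy (n : ℤ) : Measurable (shiftBy n) :=
  measurable_pi_lambda _ fun y => measurable_pi_apply (y + n)

lemma measurable_shiftC : Measurable shiftC := measurable_shiftBy 1

lemma measurable_bbsT : Measurable bbsT :=
  measurable_pi_lambda _ fun x => Measurable.ite (measurable_isRecord x).setOf measurable_const
    ((measurable_of_countable not).comp (measurable_pi_apply x))

lemma measurable_xi0_apply (x : ℤ) : Measurable fun η => xi0 η x := by
  have hsum (s : Finset ℤ) : Measurable fun η : Cfg => ∑ y ∈ s, (2 * valZ (η y) - 1) :=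
    Finset.measurable_fun_sum s fun y _ => ((measurable_valZ_apply y).const_mul 2).sub_const 1
  exact .ite (.const (0 ≤ x)) (hsum _) (hsum _).neg

lemma measurable_liftT_xi0_apply (x : ℤ) : Measurable fun η => liftT (xi0 η) x := by
  have hmin : Measurable fun η => runMin (xi0 η) x := by
    simp only [runMin, sInf_image']
    exact .iInf fun y => measurable_xi0_apply y
  exact (hmin.const_mul 2).sub (measurable_xi0_apply x)

lemma measurable_psi : Measurable psi :=
  measurable_sInf_int fun x => (measurable_liftT_xi0_apply x).eq measurable_const

lemma measurable_thetaHat : Measurable thetaHat :=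
  measurable_apply_of_countable measurable_shiftBy measurable_rFirst

lemma measurable_That : Measurable That :=
  measurable_apply_of_countable (fun n => (measurable_shiftBy n).comp measurable_bbsT)
    measurable_psi

lemma measurableSet_Xset : MeasurableSet Xset := by
  have : (cofinite : Filter ℤ).IsCountablyGenerated := Int.cofinite_eq ▸ inferInstance
  have slope_measurable (x : ℤ) : Measurable fun η => (xi0 η x : ℝ) / x :=
    ((measurable_of_countable Int.cast).comp (measurable_xi0_apply x)).div_const _
  simpa only [Xset, inX_iff (isLift_xi0 _)] using
    measurableSet_exists_mem_tendsto slope_measurable measurableSet_Ioo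

lemma measurableSet_XhatSet : MeasurableSet XhatSet :=
  measurableSet_Xset.inter (measurable_isRecord 0).setOf

/-! ### Inverse-Palm measures -/

/-- The number of sites of the cycle `(0, r(η)]` from which `η` looks like an element of `A`.
The inverse-Palm measure of `A` is the normalised mean of this number. -/
noncomputable def visits (A : Set Cfg) (η : Cfg) : ℝ≥0∞ :=
  ∑ i ∈ Icc 1 (rFirst η), A.indicator (fun _ => 1) (shiftBy i η)

lemma visits_univ (η : Cfg) : visits Set.univ η = (rFirst η).toNat := by simp [visits]

lemma visits_Xset {η : Cfg} (hη : inX η) : visits Xset η = visits Set.univ η :=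
  sum_congr rfl fun i _ => by
    rw [Set.indicator_of_mem (s := Xset) (inX_shiftBy hη i), Set.indicator_univ]

lemma PalmIdentity.apply_eq {muhat mu : Measure Cfg} (h : PalmIdentity muhat mu) {A : Set Cfg}
    (hA : MeasurableSet A) :
    mu A = (∫⁻ η, visits Set.univ η ∂muhat)⁻¹ * ∫⁻ η, visits A η ∂muhat := by
  simp only [visits_univ]
  exact h A hA

lemma measurable_visits {A : Set Cfg} (hA : MeasurableSet A) : Measurable (visits A) := by
  unfold visits
  simp only [← Ioc_sub_one_left_eq_Icc]
  exact measurable_sum_Ioc measurable_const measurable_rFirst fun i =>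
    (measurable_one.indicator hA).comp (measurable_shiftBy i)

lemma lintegral_visits_preimage {muhat : Measure Cfg} [IsFiniteMeasure muhat]
    (hθ : MeasurePreserving thetaHat muhat muhat) {g : Cfg → Cfg} (hg : Measurable g)
    (hgs : ∀ n η, g (shiftBy n η) = shiftBy n (g η)) {a : Cfg → ℤ} (ha : Measurable a)
    (ha₀ : ∀ᵐ η ∂muhat, a η ≤ 0)
    (hra : ∀ᵐ η ∂muhat, rFirst (shiftBy (a η) (g η)) = rFirst η + a (thetaHat η) - a η)
    {A : Set Cfg} (hA : MeasurableSet A) :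
    ∫⁻ η, visits (g ⁻¹' A) η ∂muhat = ∫⁻ η, visits A (shiftBy (a η) (g η)) ∂muhat := by
  let f (η : Cfg) (i : ℤ) : ℝ≥0∞ := A.indicator 1 (shiftBy i (g η))
  have hf (i : ℤ) : Measurable (f · i) :=
    (measurable_one.indicator hA).comp ((measurable_shiftBy i).comp hg)
  have hf_top (η : Cfg) (i : ℤ) : f η i ≠ ∞ :=
    ((Set.indicator_le_self A 1 _).trans_lt ENNReal.one_lt_top).ne
  have hfθ (η : Cfg) (i : ℤ) : f (thetaHat η) i = f η (i + rFirst η) := by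
    simp only [f, thetaHat, hgs, shiftBy_shiftBy]
  have visits_left (η : Cfg) : visits (g ⁻¹' A) η = ∑ i ∈ Ioc 0 (rFirst η), f η i := by
    simp only [visits, f, ← hgs, ← Icc_add_one_left_eq_Ioc]
    rfl
  have visits_right : ∀ᵐ η ∂muhat, visits A (shiftBy (a η) (g η)) =
      ∑ i ∈ Ioc (a η) (a (thetaHat η) + rFirst η), f η i := by
    filter_upwards [hra] with η hη
    rw [visits, hη, ← zero_add (1 : ℤ), Icc_add_one_left_eq_Ioc]
    simp only [shiftBy_shiftBy]
    rw [sum_Ioc_comp_add_right (fun i => A.indicator (fun _ => 1) (shiftBy i (g η)))]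
    rw [zero_add, sub_add_cancel, add_comm]
    rfl
  simp only [visits_left]
  rw [lintegral_congr_ae visits_right]
  refine lintegral_sum_Ioc_return hθ hf hf_top measurable_rFirst ha hfθ
    (.of_forall rFirst_nonneg) ha₀ ?_
  filter_upwards [hra] with η hη
  have := rFirst_nonneg (shiftBy (a η) (g η))
  omega

lemma lintegral_visits_preimage_shiftC {muhat : Measure Cfg} [IsFiniteMeasure muhat]
    (hθ : MeasurePreserving thetaHat muhat muhat) {A : Set Cfg} (hA : MeasurableSet A) :
    ∫⁻ η, visits (shiftC ⁻¹' A) η ∂muhat = ∫⁻ η, visits A η ∂muhat := by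
  have shiftBy_shiftC (η : Cfg) : shiftBy (-1) (shiftC η) = η :=
    (shiftBy_shiftBy (-1) 1 η).trans (shiftBy_zero η)
  have shiftC_shiftBy (n : ℤ) (η : Cfg) : shiftC (shiftBy n η) = shiftBy n (shiftC η) := by
    funext x
    simp only [shiftC, shiftBy, add_right_comm]
  simpa only [shiftBy_shiftC] using lintegral_visits_preimage (a := fun _ => -1) hθ
    measurable_shiftC shiftC_shiftBy measurable_const (.of_forall fun _ => by norm_num)
    (.of_forall fun η => by simp only [shiftBy_shiftC, add_sub_cancel_right]) hA

lemma lintegral_visits_preimage_bbsT {muhat : Measure Cfg} [IsFiniteMeasure muhat]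
    (hθ : MeasurePreserving thetaHat muhat muhat) (hae : ∀ᵐ η ∂muhat, η ∈ XhatSet)
    {A : Set Cfg} (hA : MeasurableSet A) :
    ∫⁻ η, visits (bbsT ⁻¹' A) η ∂muhat = ∫⁻ η, visits A (That η) ∂muhat :=
  lintegral_visits_preimage hθ measurable_bbsT bbsT_shiftBy measurable_psi
    (hae.mono fun _ hη => psi_nonpos hη.1) (hae.mono fun _ hη => rFirst_That hη) hA

lemma lintegral_visits_univ_ne_zero {muhat : Measure Cfg} [NeZero muhat]
    (hae : ∀ᵐ η ∂muhat, η ∈ XhatSet) : ∫⁻ η, visits Set.univ η ∂muhat ≠ 0 := by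
  rw [Ne, lintegral_eq_zero_iff (measurable_visits .univ)]
  intro hzero
  obtain ⟨η, h₀, hη⟩ := (hzero.and hae).exists
  have := rFirst_pos hη
  simp only [visits_univ, Pi.zero_apply, Nat.cast_eq_zero] at h₀
  omega

end

open MeasureTheory in
/-- **inverse-Palm.** Let `μ̂` be a probability measure on `𝒳̂`
invariant under the record-shift `θ̂` with `μ̂(r) < ∞`, and let `μ` be its
inverse-Palm measure (any measure satisfying the Palm identity).  Then `μ` is
`θ`-invariant, supported on `𝒳`, and `Palm(μ̂) ∘ T⁻¹ = Palm(μ̂ ∘ T̂⁻¹)`. -/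
theorem inverse_palm_properties (muhat : Measure Cfg) [IsProbabilityMeasure muhat]
    (hsupp : muhat XhatSet = 1) (hinv : muhat.map thetaHat = muhat)
    (hr : ∫⁻ η, ((rFirst η).toNat : ENNReal) ∂muhat < ⊤)
    (mu : Measure Cfg) (hmu : PalmIdentity muhat mu) :
    mu.map shiftC = mu ∧ mu Xset = 1 ∧
      ∀ mu' : Measure Cfg, PalmIdentity (muhat.map That) mu' →
        mu.map bbsT = mu' := by
  have hae : ∀ᵐ η ∂muhat, η ∈ XhatSet := (prob_compl_eq_zero_iff measurableSet_XhatSet).2 hsupp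
  have hθ : MeasurePreserving thetaHat muhat muhat := ⟨measurable_thetaHat, hinv⟩
  refine ⟨Measure.ext fun A hA => ?_, ?_, fun mu' hmu' => Measure.ext fun A hA => ?_⟩
  · rw [Measure.map_apply measurable_shiftC hA, hmu.apply_eq (measurable_shiftC hA),
      hmu.apply_eq hA, lintegral_visits_preimage_shiftC hθ hA]
  · simp only [← visits_univ] at hr
    rw [hmu.apply_eq measurableSet_Xset,
      lintegral_congr_ae (hae.mono fun _ hη => visits_Xset hη.1),
      ENNReal.inv_mul_cancel (lintegral_visits_univ_ne_zero hae) hr.ne]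
  · have lintegral_visits_map {B : Set Cfg} (hB : MeasurableSet B) :
        ∫⁻ η, visits B η ∂muhat.map That = ∫⁻ η, visits (bbsT ⁻¹' B) η ∂muhat := by
      rw [lintegral_map (measurable_visits hB) measurable_That,
        lintegral_visits_preimage_bbsT hθ hae hB]
    rw [Measure.map_apply measurable_bbsT hA, hmu.apply_eq (measurable_bbsT hA), hmu'.apply_eq hA,
      lintegral_visits_map hA, lintegral_visits_map .univ, Set.preimage_univ]
end
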